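/- arXiv:1712.04916 — 3 statements merged into one kernel-verified Lean document; each statement's English description precedes it below -/
import Mathlib

section
/- Let n ≥ 1 and let w_1,…,w_n : (0,∞) → ℝ be measurable functions with ∫₀^∞ t^{u−1}|w_b(t)| dt < ∞ for every u ∈ [1, 2n−1] and every b. Then: (i) ∫_{(0,∞)ⁿ} Δ_n(a²) · det[w_b(a_c)]_{b,c=1..n} da = n! · det[Mw_c(2b−1)]_{b,c=1..n}; and (ii) for every s ∈ ℂⁿ with pairwise distinct entries satisfying Re(s_b) ∈ [n, 3n−2] for all b, (∏_{j=0}^{n−1} 2^j·j!) · ∫_{(0,∞)ⁿ} Δ_n(a²) det[w_b(a_c)]_{b,c} · (∏_j a_j)^{−(2n−1)} · det[a_c^{s_b+n−1}]_{b,c} / (Δ_n(a²)·Δ_n(s_1,…,s_n)) da = n!·(∏_{j=0}^{n−1} 2^j·j!) · det[Mw_c(s_b − n + 1)]_{b,c=1..n} / Δ_n(s_1,…,s_n). -/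
open MeasureTheory Matrix
open scoped BigOperators

noncomputable section

/-- `t ^ w` for a real `t ≥ 0` and complex `w`, with the convention `0 ^ w = 0`. -/
def cpw (t : ℝ) (w : ℂ) : ℂ := if t = 0 then 0 else Complex.exp (w * Real.log t)

/-- Vandermonde product `Δ_m(x) = ∏_{j<k} (x_k - x_j)`. -/
def vdm {m : ℕ} {R : Type*} [CommRing R] (x : Fin m → R) : R :=
  ∏ p ∈ Finset.univ.filter (fun p : Fin m × Fin m => p.1 < p.2), (x p.2 - x p.1)

/-- Real Mellin transform `Mw(u) = ∫₀^∞ w(t) t^{u-1} dt`. -/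
def mellinR (w : ℝ → ℝ) (u : ℝ) : ℝ := ∫ t in Set.Ioi (0 : ℝ), w t * t ^ (u - 1)

/-- Complex Mellin transform `Mw(u) = ∫₀^∞ w(t) t^{u-1} dt`, `u ∈ ℂ`. -/
def mellinC (w : ℝ → ℝ) (u : ℂ) : ℂ := ∫ t in Set.Ioi (0 : ℝ), (w t : ℂ) * cpw t (u - 1)

theorem andreief_aux {𝕜 : Type*} [RCLike 𝕜] {n : ℕ} (μ : Measure ℝ) [SigmaFinite μ]
    (f g : Fin n → ℝ → 𝕜) (h : ∀ i j, Integrable (fun t => f i t * g j t) μ) :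
    ∫ a, (Matrix.of fun b c : Fin n => f b (a c)).det *
        (Matrix.of fun b c : Fin n => g b (a c)).det ∂(Measure.pi fun _ : Fin n => μ) =
      (Nat.factorial n : 𝕜) * (Matrix.of fun b c : Fin n => ∫ t, f b t * g c t ∂μ).det := by
  have e : ∀ a : Fin n → ℝ, (Matrix.of fun b c : Fin n => f b (a c)).det *
        (Matrix.of fun b c : Fin n => g b (a c)).det =
      ∑ τ : Equiv.Perm (Fin n), ∑ σ : Equiv.Perm (Fin n),
        (((Equiv.Perm.sign τ : ℤ) : 𝕜) * ((Equiv.Perm.sign σ : ℤ) : 𝕜)) *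
          ∏ i, (f (σ i) (a i) * g (τ i) (a i)) := by
    intro a
    rw [Matrix.det_apply', Matrix.det_apply', Finset.sum_mul_sum, Finset.sum_comm]
    refine Finset.sum_congr rfl fun τ _ => Finset.sum_congr rfl fun σ _ => ?_
    simp only [Matrix.of_apply, Finset.prod_mul_distrib]
    ring
  have hi : ∀ τ σ : Equiv.Perm (Fin n), Integrable (fun a : Fin n → ℝ =>
      (((Equiv.Perm.sign τ : ℤ) : 𝕜) * ((Equiv.Perm.sign σ : ℤ) : 𝕜)) *
          ∏ i, (f (σ i) (a i) * g (τ i) (a i))) (Measure.pi fun _ : Fin n => μ) := by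
    intro τ σ
    refine Integrable.const_mul ?_ _
    exact Integrable.fintype_prod (f := fun i t => f (σ i) t * g (τ i) t)
      (fun i => h (σ i) (τ i))
  simp_rw [e]
  rw [integral_finsetSum _ fun τ _ => integrable_finsetSum _ fun σ _ => hi τ σ]
  have key : ∀ τ : Equiv.Perm (Fin n), ∫ a, ∑ σ : Equiv.Perm (Fin n),
        (((Equiv.Perm.sign τ : ℤ) : 𝕜) * ((Equiv.Perm.sign σ : ℤ) : 𝕜)) *
          ∏ i, (f (σ i) (a i) * g (τ i) (a i)) ∂(Measure.pi fun _ : Fin n => μ) =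
      (Matrix.of fun b c : Fin n => ∫ t, f b t * g c t ∂μ).det := by
    intro τ
    rw [integral_finsetSum _ fun σ _ => hi τ σ]
    have h1 : ∀ σ : Equiv.Perm (Fin n), ∫ a,
        (((Equiv.Perm.sign τ : ℤ) : 𝕜) * ((Equiv.Perm.sign σ : ℤ) : 𝕜)) *
          ∏ i, (f (σ i) (a i) * g (τ i) (a i)) ∂(Measure.pi fun _ : Fin n => μ) =
        ((Equiv.Perm.sign τ : ℤ) : 𝕜) * (((Equiv.Perm.sign σ : ℤ) : 𝕜) *
          ∏ i, ∫ t, f (σ i) t * g (τ i) t ∂μ) := by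
      intro σ
      rw [integral_const_mul,
        integral_fintype_prod_eq_prod (fun i t => f (σ i) t * g (τ i) t), mul_assoc]
    simp_rw [h1]
    rw [← Finset.mul_sum]
    have h2 := Matrix.det_permute' τ (Matrix.of fun b c : Fin n => ∫ t, f b t * g c t ∂μ)
    rw [Matrix.det_apply'] at h2
    simp only [Matrix.submatrix_apply, Matrix.of_apply, id] at h2
    rw [h2, ← mul_assoc, ← Int.cast_mul]
    have : ((Equiv.Perm.sign τ : ℤ)) * (Equiv.Perm.sign τ : ℤ) = 1 := by
      rw [← Units.val_mul, Int.units_mul_self]; rfl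
    rw [this]; simp
  simp_rw [key]
  simp [Fintype.card_perm]

theorem andreief_pos {𝕜 : Type*} [RCLike 𝕜] {n : ℕ}
    (f g : Fin n → ℝ → 𝕜) (h : ∀ i j, IntegrableOn (fun t => f i t * g j t) (Set.Ioi 0)) :
    ∫ a in {a : Fin n → ℝ | ∀ j, 0 < a j}, (Matrix.of fun b c : Fin n => f b (a c)).det *
        (Matrix.of fun b c : Fin n => g b (a c)).det =
      (Nat.factorial n : 𝕜) *
        (Matrix.of fun b c : Fin n => ∫ t in Set.Ioi 0, f b t * g c t).det := by
  have hs : {a : Fin n → ℝ | ∀ j, 0 < a j} = Set.univ.pi fun _ => Set.Ioi (0 : ℝ) := by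
    ext a; simp
  rw [hs, volume_pi, Measure.restrict_pi_pi]
  exact andreief_aux _ f g h

theorem measurableSet_pos_aux (n : ℕ) : MeasurableSet {a : Fin n → ℝ | ∀ j, 0 < a j} := by
  have hs : {a : Fin n → ℝ | ∀ j, 0 < a j} = Set.univ.pi fun _ => Set.Ioi (0 : ℝ) := by
    ext a; simp
  rw [hs]
  exact MeasurableSet.univ_pi fun _ => measurableSet_Ioi

theorem vdm_eq_det {m : ℕ} {R : Type*} [CommRing R] (x : Fin m → R) :
    vdm x = (Matrix.of fun b c : Fin m => x c ^ (b : ℕ)).det := by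
  have : (Matrix.of fun b c : Fin m => x c ^ (b : ℕ)) = (Matrix.vandermonde x)ᵀ := by
    ext b c; simp [Matrix.vandermonde_apply]
  rw [this, Matrix.det_transpose, Matrix.det_vandermonde, vdm, Finset.prod_filter,
    ← Finset.univ_product_univ, Finset.prod_product]
  refine Finset.prod_congr rfl fun i _ => ?_
  rw [← Finset.prod_filter]
  refine Finset.prod_congr ?_ fun _ _ => rfl
  ext j; simp

theorem vdm_eq_zero_aux {m : ℕ} {x : Fin m → ℝ} (h : vdm x = 0) : ∃ i j, i ≠ j ∧ x i = x j := by
  rw [vdm, Finset.prod_eq_zero_iff] at h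
  obtain ⟨p, hp, h⟩ := h
  exact ⟨p.1, p.2, (Finset.mem_filter.1 hp).2.ne, (sub_eq_zero.1 h).symm⟩

theorem cpw_shift {t : ℝ} (ht : 0 < t) (r : ℝ) (z : ℂ) :
    ((t ^ r : ℝ) : ℂ) * cpw t z = cpw t (z + r) := by
  rw [cpw, cpw, if_neg ht.ne', if_neg ht.ne', Real.rpow_def_of_pos ht, Complex.ofReal_exp,
    ← Complex.exp_add]
  congr 1
  push_cast
  ring

theorem norm_cpw {t : ℝ} (ht : 0 < t) (z : ℂ) : ‖cpw t z‖ = t ^ z.re := by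
  rw [cpw, if_neg ht.ne', Complex.norm_exp, Real.rpow_def_of_pos ht]
  congr 1
  simp [mul_comm]

theorem measurable_cpw (z : ℂ) : Measurable fun t => cpw t z := by
  unfold cpw
  refine Measurable.ite (measurableSet_singleton 0) measurable_const ?_
  fun_prop

/-- Proposition 3.1, Andréief-type identities: normalization of a
polynomial ensemble on `H` and the spherical transform of a polynomial ensemble. -/
theorem polynomial_ensemble_transform (n : ℕ) (hn : 1 ≤ n)
    (w : Fin n → ℝ → ℝ) (hwm : ∀ b, Measurable (w b))
    (hwint : ∀ u ∈ Set.Icc (1 : ℝ) (2 * (n : ℝ) - 1), ∀ b,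
      IntegrableOn (fun t : ℝ => t ^ (u - 1) * |w b t|) (Set.Ioi 0)) :
    ((∫ a in {a : Fin n → ℝ | ∀ j, 0 < a j},
        (vdm fun j => (a j) ^ 2) * (Matrix.of fun b c : Fin n => w b (a c)).det) =
      (Nat.factorial n : ℝ) *
        (Matrix.of fun b c : Fin n => mellinR (w c) (2 * ((b : ℕ) + 1 : ℝ) - 1)).det) ∧
    (∀ s : Fin n → ℂ, Function.Injective s →
      (∀ b : Fin n, (s b).re ∈ Set.Icc (n : ℝ) (3 * (n : ℝ) - 2)) →
      ((∏ j ∈ Finset.range n, 2 ^ j * Nat.factorial j : ℕ) : ℂ) *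
          ∫ a in {a : Fin n → ℝ | ∀ j, 0 < a j},
            (((vdm fun j => (a j) ^ 2) * (Matrix.of fun b c : Fin n => w b (a c)).det *
                (∏ j, a j) ^ (-(2 * (n : ℝ) - 1)) : ℝ) : ℂ) *
              (Matrix.of fun b c : Fin n => cpw (a c) (s b + (n : ℂ) - 1)).det /
                (((vdm fun j => (a j) ^ 2 : ℝ) : ℂ) * vdm s) =
        (Nat.factorial n : ℂ) * ((∏ j ∈ Finset.range n, 2 ^ j * Nat.factorial j : ℕ) : ℂ) *
          (Matrix.of fun b c : Fin n => mellinC (w c) (s b - (n : ℂ) + 1)).det / vdm s) := by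
  constructor
  · have hA := andreief_pos (fun (b : Fin n) (t : ℝ) => (t ^ 2) ^ (b : ℕ)) w ?_
    · simp_rw [vdm_eq_det]
      rw [hA]
      congr 2
      ext b c
      simp only [Matrix.of_apply, mellinR]
      refine setIntegral_congr_fun measurableSet_Ioi fun t ht => ?_
      beta_reduce
      rw [mul_comm, ← pow_mul, ← Real.rpow_natCast]
      congr 2
      push_cast; ring
    · intro i j
      have hi : ((i : ℕ) : ℝ) + 1 ≤ n := by exact_mod_cast i.2
      have h0 : (0 : ℝ) ≤ (i : ℕ) := Nat.cast_nonneg _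
      have := hwint (2 * (i : ℕ) + 1) ⟨by linarith, by linarith⟩ j
      refine Integrable.mono this ?_ ?_
      · exact Measurable.aestronglyMeasurable (by have := hwm j; fun_prop)
      · refine (ae_restrict_mem measurableSet_Ioi).mono fun t ht => le_of_eq ?_
        rw [norm_mul, norm_mul, ← pow_mul, ← Real.rpow_natCast]
        simp
  · intro s hs hre
    have hA := andreief_pos (fun (b : Fin n) (t : ℝ) => cpw t (s b - n))
      (fun b t => (w b t : ℂ)) ?_
    · have hint : ∫ a in {a : Fin n → ℝ | ∀ j, 0 < a j},
            (((vdm fun j => (a j) ^ 2) * (Matrix.of fun b c : Fin n => w b (a c)).det *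
                (∏ j, a j) ^ (-(2 * (n : ℝ) - 1)) : ℝ) : ℂ) *
              (Matrix.of fun b c : Fin n => cpw (a c) (s b + (n : ℂ) - 1)).det /
                (((vdm fun j => (a j) ^ 2 : ℝ) : ℂ) * vdm s) =
          ∫ a in {a : Fin n → ℝ | ∀ j, 0 < a j},
            ((Matrix.of fun b c : Fin n => cpw (a c) (s b - n)).det *
              (Matrix.of fun b c : Fin n => (w b (a c) : ℂ)).det) / vdm s := by
        refine setIntegral_congr_fun (measurableSet_pos_aux n) fun a ha => ?_
        have ha' : ∀ j, 0 < a j := ha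
        have hw : (Matrix.of fun b c : Fin n => (w b (a c) : ℂ)).det =
            (((Matrix.of fun b c : Fin n => w b (a c)).det : ℝ) : ℂ) := by
          rw [Matrix.det_apply, Matrix.det_apply]
          simp [Units.smul_def]
        have hc : (((∏ j, a j) ^ (-(2 * (n : ℝ) - 1)) : ℝ) : ℂ) *
            (Matrix.of fun b c : Fin n => cpw (a c) (s b + (n : ℂ) - 1)).det =
            (Matrix.of fun b c : Fin n => cpw (a c) (s b - n)).det := by
          rw [← Real.finsetProd_rpow _ _ (fun i _ => (ha' i).le), Complex.ofReal_prod,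
            ← Matrix.det_mul_row]
          congr 1
          ext b c
          simp only [Matrix.of_apply]
          rw [cpw_shift (ha' c)]
          congr 1
          push_cast; ring
        beta_reduce
        rw [hw, ← hc]
        by_cases hv : (vdm fun j => (a j) ^ 2) = 0
        · obtain ⟨i, j, hij, h⟩ := vdm_eq_zero_aux hv
          have h' : a i = a j := (pow_left_inj₀ (ha' i).le (ha' j).le two_ne_zero).1 h
          have : (Matrix.of fun b c : Fin n => w b (a c)).det = 0 :=
            Matrix.det_zero_of_column_eq hij (fun k => by simp [h'])
          rw [this]; simp
        · have hv' : (((vdm fun j => (a j) ^ 2 : ℝ)) : ℂ) ≠ 0 := by exact_mod_cast hv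
          rw [← mul_div_mul_left _ (vdm s) hv']
          congr 1
          push_cast
          ring
      rw [hint, integral_div, hA]
      have hM : (Matrix.of fun b c : Fin n => ∫ t in Set.Ioi 0, cpw t (s b - n) * (w c t : ℂ)) =
          (Matrix.of fun b c : Fin n => mellinC (w c) (s b - (n : ℂ) + 1)) := by
        ext b c
        simp only [Matrix.of_apply, mellinC, add_sub_cancel_right]
        simp_rw [mul_comm]
      rw [hM]
      ring
    · intro i j
      have hi := hre i
      have := hwint ((s i).re - n + 1) ⟨by linarith [hi.1], by linarith [hi.2]⟩ j
      refine Integrable.mono this ?_ ?_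
      · exact Measurable.aestronglyMeasurable
          ((measurable_cpw _).mul (Complex.measurable_ofReal.comp (hwm j)))
      · refine (ae_restrict_mem measurableSet_Ioi).mono fun t ht => le_of_eq ?_
        have ht' : 0 < t := ht
        rw [norm_mul, norm_mul, norm_cpw ht']
        simp [abs_of_nonneg (Real.rpow_nonneg ht'.le _)]

end
end

section
/- Let n ≥ 1 and let P_G be a factorizing density with weight σ. Set m_σ(u) := ∫_{M₂(ℝ)} σ(z)·|det z|^{u−1} dz. Let s ∈ ℂⁿ be such that ∫_{M₂(ℝ)} σ(z)·|det z|^{Re(s_j)−n} dz < ∞ for every j, and assume 0 < m_σ(2j−1) < ∞ for j = 1,…,n. Then ∫ P_G(g) · (det g gᵀ)^{−(2n−1)/2} · Ψ_n(s, g gᵀ) dg = ∏_{j=1}^n m_σ(s_j − n + 1) / m_σ(2j−1), the integral on the left being over invertible g ∈ M_{2n}(ℝ) with respect to Lebesgue measure. -/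
open MeasureTheory Matrix
open scoped BigOperators

noncomputable section

instance matrixMeasurableSpace {l : Type*} [Fintype l] : MeasurableSpace (Matrix l l ℝ) :=
  inferInstanceAs (MeasurableSpace (l → l → ℝ))

/-- The orthogonal group `O(m)` as a subtype of `m × m` real matrices. -/
abbrev OG (m : ℕ) := Matrix.orthogonalGroup (Fin m) ℝ

/-- The `2n × 2n` real antisymmetric matrix `D(a) = diag(a₁ J, …, aₙ J)`,
`J = [[0,1],[-1,0]]`. -/
def Dmat {n : ℕ} (a : Fin n → ℝ) : Matrix (Fin (2 * n)) (Fin (2 * n)) ℝ :=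
  Matrix.of fun i j =>
    if i.val / 2 = j.val / 2 then
      a ⟨i.val / 2, by have := i.isLt; omega⟩ *
        (if i.val % 2 = 0 ∧ j.val % 2 = 1 then 1
          else if i.val % 2 = 1 ∧ j.val % 2 = 0 then -1 else 0)
    else 0

/-- `s_{n+1} := -n-1` convention: the `j`-th exponent `(s_j - s_{j+1})/2 - 1`. -/
def expo (n : ℕ) (s : Fin n → ℂ) (j : Fin n) : ℂ :=
  (s j - (if h : j.val + 1 < n then s ⟨j.val + 1, h⟩ else -(n : ℂ) - 1)) / 2 - 1

/-- The spherical-type group integral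
`f_n(s,X) = ∫_{O(2n)} ∏_j det((kXkᵀ)_{[2j]})^{(s_j-s_{j+1})/2-1} d*k`. -/
def sphInt (n : ℕ) (μ : Measure (OG (2 * n))) (s : Fin n → ℂ)
    (X : Matrix (Fin (2 * n)) (Fin (2 * n)) ℝ) : ℂ :=
  ∫ k : OG (2 * n), ∏ j : Fin n,
    cpw ((((k : Matrix (Fin (2 * n)) (Fin (2 * n)) ℝ) * X *
        (k : Matrix (Fin (2 * n)) (Fin (2 * n)) ℝ)ᵀ).submatrix
          (Fin.castLE (by have := j.isLt; omega : 2 * (j.val + 1) ≤ 2 * n))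
          (Fin.castLE (by have := j.isLt; omega : 2 * (j.val + 1) ≤ 2 * n))).det)
      (expo n s j) ∂μ


/-- The block lower-triangular matrix in `T` with `2×2` identity diagonal blocks
built from its strictly-lower `2×2` blocks. -/
def Tmat {n : ℕ} (c : {ij : Fin n × Fin n // ij.2 < ij.1} → Fin 2 → Fin 2 → ℝ) :
    Matrix (Fin (2 * n)) (Fin (2 * n)) ℝ :=
  Matrix.of fun i j =>
    if h : j.val / 2 < i.val / 2 then
      c ⟨(⟨i.val / 2, by have := i.isLt; omega⟩, ⟨j.val / 2, by have := j.isLt; omega⟩),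
          Fin.mk_lt_mk.mpr h⟩ ⟨i.val % 2, by omega⟩ ⟨j.val % 2, by omega⟩
    else if i.val / 2 = j.val / 2 then (if i.val % 2 = j.val % 2 then 1 else 0) else 0

/-- The `2×2` block-diagonal matrix `diag(z₁,…,zₙ)` built from its blocks. -/
def Zmat {n : ℕ} (zc : Fin n → Fin 2 → Fin 2 → ℝ) : Matrix (Fin (2 * n)) (Fin (2 * n)) ℝ :=
  Matrix.of fun i j =>
    if i.val / 2 = j.val / 2 then
      zc ⟨i.val / 2, by have := i.isLt; omega⟩ ⟨i.val % 2, by omega⟩ ⟨j.val % 2, by omega⟩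
    else 0

/-- A factorizing ensemble on `Gl_ℝ(2n)`: a `K`-bi-invariant probability density whose
block-triangular decomposition density factorizes with weight `σw`. -/
structure IsFactorizing (n : ℕ) (P : Matrix (Fin (2 * n)) (Fin (2 * n)) ℝ → ℝ)
    (σw : Matrix (Fin 2) (Fin 2) ℝ → ℝ) : Prop where
  nonneg : ∀ g, 0 ≤ P g
  integrable : Integrable (fun u : Fin (2 * n) → Fin (2 * n) → ℝ => P (Matrix.of u))
  prob : (∫ u : Fin (2 * n) → Fin (2 * n) → ℝ, P (Matrix.of u)) = 1
  invariant : ∀ g, ∀ k₁ ∈ Matrix.orthogonalGroup (Fin (2 * n)) ℝ,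
      ∀ k₂ ∈ Matrix.orthogonalGroup (Fin (2 * n)) ℝ, P (k₁ * g * k₂) = P g
  wnonneg : ∀ z, 0 ≤ σw z
  factor : ∀ᵐ zc : Fin n → Fin 2 → Fin 2 → ℝ,
    (∏ j : Fin n, ((Matrix.of (zc j)) * (Matrix.of (zc j))ᵀ).det ^ (n - 1 - j.val)) *
        (∫ c : {ij : Fin n × Fin n // ij.2 < ij.1} → Fin 2 → Fin 2 → ℝ,
          P (Tmat c * Zmat zc)) =
      ∏ j : Fin n, σw (Matrix.of (zc j))

/-- Real Mellin transform of the induced determinant density,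
`m_σ(u) = ∫_{M₂(ℝ)} σ(z) |det z|^{u-1} dz`, for real `u`. -/
def mSigR (σw : Matrix (Fin 2) (Fin 2) ℝ → ℝ) (u : ℝ) : ℝ :=
  ∫ z : Fin 2 → Fin 2 → ℝ, σw (Matrix.of z) * |(Matrix.of z).det| ^ (u - 1)

/-- Complex version of `m_σ(u) = ∫_{M₂(ℝ)} σ(z) |det z|^{u-1} dz`. -/
def mSigC (σw : Matrix (Fin 2) (Fin 2) ℝ → ℝ) (u : ℂ) : ℂ :=
  ∫ z : Fin 2 → Fin 2 → ℝ, (σw (Matrix.of z) : ℂ) * cpw |(Matrix.of z).det| (u - 1)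

set_option linter.all false

abbrev CC (n : ℕ) := {ij : Fin n × Fin n // ij.2 < ij.1} → Fin 2 → Fin 2 → ℝ
abbrev ZZ (n : ℕ) := Fin n → Fin 2 → Fin 2 → ℝ
abbrev XX (n : ℕ) := CC n × ZZ n
abbrev MM (n : ℕ) := Fin (2 * n) → Fin (2 * n) → ℝ
abbrev Mx (n : ℕ) := Matrix (Fin (2 * n)) (Fin (2 * n)) ℝ

def blk {n : ℕ} (i : Fin (2 * n)) : Fin n := ⟨i.val / 2, by have := i.isLt; omega⟩
def par {n : ℕ} (i : Fin (2 * n)) : Fin 2 := ⟨i.val % 2, by omega⟩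
def idx {n : ℕ} (a : Fin n) (e : Fin 2) : Fin (2 * n) :=
  ⟨2 * a.val + e.val, by have := a.isLt; have := e.isLt; omega⟩

@[simp] lemma blk_idx {n : ℕ} (a : Fin n) (e : Fin 2) : blk (idx a e) = a := by
  ext; simp only [blk, idx]; have := e.isLt; omega
@[simp] lemma par_idx {n : ℕ} (a : Fin n) (e : Fin 2) : par (idx a e) = e := by
  ext; simp only [par, idx]; have := e.isLt; omega
@[simp] lemma idx_blk_par {n : ℕ} (i : Fin (2 * n)) : idx (blk i) (par i) = i := by
  ext; simp only [par, idx, blk]; omega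

def idxEquiv (n : ℕ) : Fin n × Fin 2 ≃ Fin (2 * n) where
  toFun p := idx p.1 p.2
  invFun i := (blk i, par i)
  left_inv p := by simp
  right_inv i := by simp

lemma prod_blk {n : ℕ} (f : Fin n → ℝ) : ∏ i : Fin (2 * n), f (blk i) = ∏ a, f a ^ 2 := by
  rw [← (idxEquiv n).prod_comp, Fintype.prod_prod_type]
  simp [idxEquiv]

/-- matrix from blocks -/
def Bm {n : ℕ} : XX n →ₗ[ℝ] Mx n where
  toFun x := Matrix.of fun i j =>
    if h : blk j < blk i then x.1 ⟨(blk i, blk j), h⟩ (par i) (par j)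
    else if blk i = blk j then x.2 (blk i) (par i) (par j) else 0
  map_add' x y := by
    ext i j; simp only [Matrix.add_apply, Matrix.of_apply]; split_ifs <;> simp
  map_smul' c x := by
    ext i j; simp only [Matrix.smul_apply, Matrix.of_apply]; split_ifs <;> simp

lemma Bm_apply {n : ℕ} (x : XX n) (i j) : Bm x i j = 
    if h : blk j < blk i then x.1 ⟨(blk i, blk j), h⟩ (par i) (par j)
    else if blk i = blk j then x.2 (blk i) (par i) (par j) else 0 := rfl

def Em {n : ℕ} : Mx n →ₗ[ℝ] XX n where
  toFun M := (fun ij p q => M (idx ij.1.1 p) (idx ij.1.2 q), fun a p q => M (idx a p) (idx a q))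
  map_add' x y := rfl
  map_smul' c x := rfl

lemma Em_fst {n : ℕ} (M : Mx n) (ij p q) : (Em M).1 ij p q = M (idx ij.1.1 p) (idx ij.1.2 q) := rfl
lemma Em_snd {n : ℕ} (M : Mx n) (a p q) : (Em M).2 a p q = M (idx a p) (idx a q) := rfl

@[simp] lemma Em_Bm {n : ℕ} (x : XX n) : Em (Bm x) = x := by
  ext ij p q
  · obtain ⟨⟨i, j⟩, h⟩ := ij
    have h' : j < i := h
    simp [Em_fst, Bm_apply, h']
  · simp [Em_snd, Bm_apply]

abbrev Low {n : ℕ} (M : Mx n) : Prop := M.BlockTriangular (OrderDual.toDual ∘ blk)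

lemma low_iff {n : ℕ} (M : Mx n) : Low M ↔ ∀ i j, blk i < blk j → M i j = 0 := by
  constructor
  · intro h i j hij; exact h (by simpa using hij)
  · intro h i j hij; exact h i j (by simpa using hij)

lemma Bm_low {n : ℕ} (x : XX n) : Low (Bm x) := by
  rw [low_iff]; intro i j h
  rw [Bm_apply, dif_neg (not_lt.2 h.le), if_neg h.ne]

lemma Bm_Em {n : ℕ} (M : Mx n) (hM : Low M) : Bm (Em M) = M := by
  rw [low_iff] at hM
  ext i j
  rw [Bm_apply]
  split_ifs with h1 h2
  · simp [Em_fst]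
  · rw [Em_snd, idx_blk_par, h2, idx_blk_par]
  · exact (hM i j (lt_of_le_of_ne (not_lt.1 h1) h2)).symm

def zdet {n : ℕ} (z : ZZ n) (a : Fin n) : ℝ := (Matrix.of (z a)).det

lemma detSub {n : ℕ} (p : Fin n → Prop) [DecidablePred p] (x : XX n) :
    ((Bm x).submatrix (Subtype.val : {k // p (blk k)} → _) Subtype.val).det
      = ∏ a, if p a then zdet x.2 a else 1 := by
  have h : ((Bm x).submatrix (Subtype.val : {k // p (blk k)} → _) Subtype.val).BlockTriangular
      (OrderDual.toDual ∘ blk ∘ Subtype.val) := fun i j hij => Bm_low x hij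
  rw [h.det_fintype]
  refine Fintype.prod_equiv OrderDual.ofDual _ _ fun a => ?_
  induction a using OrderDual.rec with | _ a => ?_
  split_ifs with hp
  · have hp : p a := hp
    let e : Fin 2 ≃ {i : {k // p (blk k)} // (OrderDual.toDual ∘ blk ∘ Subtype.val) i = OrderDual.toDual a} :=
      { toFun := fun q => ⟨⟨idx a q, by simpa using hp⟩, by simp⟩
        invFun := fun i => par i.1.1
        left_inv := fun q => by simp
        right_inv := fun i => by
          obtain ⟨⟨i, h1⟩, h2⟩ := i
          have h2 : blk i = a := by simpa using h2
          subst h2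
          simp }
    rw [← Matrix.det_submatrix_equiv_self e]
    unfold zdet
    congr 1
    ext q r
    simp [Matrix.toSquareBlock_def, e, Bm_apply]
  · have : IsEmpty {i : {k // p (blk k)} // (OrderDual.toDual ∘ blk ∘ Subtype.val) i = OrderDual.toDual a} :=
      ⟨fun i => hp (by
        obtain ⟨⟨i, h1⟩, h2⟩ := i
        have h2 : blk i = a := by simpa using h2
        subst h2; exact h1)⟩
    exact Matrix.det_isEmpty

lemma det_Bm {n : ℕ} (x : XX n) : (Bm x).det = ∏ a, zdet x.2 a := by
  have := detSub (fun _ => True) x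
  have h2 := Matrix.det_submatrix_equiv_self
    (Equiv.subtypeUnivEquiv (p := fun _ : Fin (2 * n) => True) (fun _ => trivial)) (Bm x)
  rw [← h2]
  refine Eq.trans ?_ (this.trans (by simp))
  rfl

lemma det_blockDiag' {ι : Type*} [Fintype ι] [LinearOrder ι] {κ : ι → Type*} [∀ i, Fintype (κ i)]
    [∀ i, DecidableEq (κ i)] (M : ∀ i, Matrix (κ i) (κ i) ℝ) :
    (Matrix.blockDiagonal' M).det = ∏ i, (M i).det := by
  rw [(Matrix.blockTriangular_blockDiagonal' M).det_fintype]
  refine Finset.prod_congr rfl fun i _ => ?_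
  rw [← Matrix.det_submatrix_equiv_self (Equiv.sigmaSubtype i).symm]
  congr 1
  ext a b
  simp [Matrix.toSquareBlock_def, Equiv.sigmaSubtype, Matrix.blockDiagonal'_apply]

def eR (n : ℕ) : XX n ≃ₗ[ℝ] ((Σ i : Fin (2*n), {j : Fin (2*n) // blk j ≤ blk i}) → ℝ) where
  toFun x := fun p => Bm x p.1 p.2.1
  map_add' x y := by ext p; simp
  map_smul' c x := by ext p; simp
  invFun y := Em (Matrix.of fun i j => if h : blk j ≤ blk i then y ⟨i, j, h⟩ else 0)
  left_inv x := by
    refine Eq.trans ?_ (Em_Bm x); refine congrArg Em ?_; ext i j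
    simp only [Matrix.of_apply]
    split_ifs with h
    · rfl
    · exact ((low_iff _).1 (Bm_low x) i j (not_le.1 h)).symm
  right_inv y := by
    ext ⟨i, j, h⟩
    simp only
    rw [Bm_Em]
    · simp [h]
    · rw [low_iff]; intro i j h; simp [not_le.2 h]

def eL (n : ℕ) : XX n ≃ₗ[ℝ] ((Σ j : Fin (2*n), {i : Fin (2*n) // blk j ≤ blk i}) → ℝ) where
  toFun x := fun p => Bm x p.2.1 p.1
  map_add' x y := by ext p; simp
  map_smul' c x := by ext p; simp
  invFun y := Em (Matrix.of fun i j => if h : blk j ≤ blk i then y ⟨j, i, h⟩ else 0)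
  left_inv x := by
    refine Eq.trans ?_ (Em_Bm x); refine congrArg Em ?_; ext i j
    simp only [Matrix.of_apply]
    split_ifs with h
    · rfl
    · exact ((low_iff _).1 (Bm_low x) i j (not_le.1 h)).symm
  right_inv y := by
    ext ⟨i, j, h⟩
    simp only
    rw [Bm_Em]
    · simp [h]
    · rw [low_iff]; intro i j h; simp [not_le.2 h]

def Rlin {n : ℕ} (x0 : XX n) : XX n →ₗ[ℝ] XX n :=
  Em ∘ₗ (LinearMap.mulRight ℝ (Bm x0)) ∘ₗ Bm
def Llin {n : ℕ} (x0 : XX n) : XX n →ₗ[ℝ] XX n :=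
  Em ∘ₗ (LinearMap.mulLeft ℝ (Bm x0)) ∘ₗ Bm

lemma Bm_Rlin {n : ℕ} (x0 x : XX n) : Bm (Rlin x0 x) = Bm x * Bm x0 := by
  simp only [Rlin, LinearMap.comp_apply, LinearMap.mulRight_apply]
  exact Bm_Em _ ((Bm_low x).mul (Bm_low x0))
lemma Bm_Llin {n : ℕ} (x0 x : XX n) : Bm (Llin x0 x) = Bm x0 * Bm x := by
  simp only [Llin, LinearMap.comp_apply, LinearMap.mulLeft_apply]
  exact Bm_Em _ ((Bm_low x0).mul (Bm_low x))

lemma sum_sub {ι : Type*} [Fintype ι] (p : ι → Prop) [DecidablePred p] (f : ι → ℝ) 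
    (hf : ∀ i, ¬ p i → f i = 0) : ∑ i, f i = ∑ i : {i // p i}, f i.1 := by
  rw [← Finset.sum_subtype (Finset.univ.filter p) (by simp) f]
  rw [Finset.sum_filter]
  refine Finset.sum_congr rfl fun i _ => ?_
  split_ifs with h
  · rfl
  · exact hf i h

lemma det_Rlin {n : ℕ} (x0 : XX n) :
    LinearMap.det (Rlin x0) = ∏ m : Fin n, (∏ a, if a ≤ m then zdet x0.2 a else 1) ^ 2 := by
  rw [← LinearMap.det_conj (Rlin x0) (eR n)]
  have : ((eR n).toLinearMap ∘ₗ Rlin x0 ∘ₗ (eR n).symm.toLinearMap) =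
    Matrix.toLin' (Matrix.blockDiagonal' (fun i : Fin (2*n) => 
      ((Bm x0).submatrix (Subtype.val : {k // blk k ≤ blk i} → _) Subtype.val)ᵀ)) := by
    refine LinearMap.ext fun y => ?_
    obtain ⟨x, rfl⟩ := (eR n).surjective y
    ext ⟨i, j, h⟩
    simp only [LinearMap.comp_apply, LinearEquiv.coe_coe, LinearEquiv.symm_apply_apply,
      Matrix.toLin'_apply, Matrix.mulVec, dotProduct]
    simp only [eR, LinearEquiv.coe_mk, LinearMap.coe_mk, AddHom.coe_mk, Bm_Rlin,
      Matrix.blockDiagonal'_apply, Fintype.sum_sigma]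
    rw [Finset.sum_eq_single i]
    · simp only [dite_true, cast_eq, Matrix.transpose_apply, Matrix.submatrix_apply, Matrix.mul_apply]
      rw [sum_sub (fun k => blk k ≤ blk i)]
      · exact Finset.sum_congr rfl fun k _ => mul_comm _ _
      · intro k hk
        rw [(low_iff _).1 (Bm_low x) i k (not_le.1 hk), zero_mul]
    · intro k _ hk
      simp [Ne.symm hk]
    · simp
  rw [this, LinearMap.det_toLin', det_blockDiag']
  simp only [Matrix.det_transpose]
  rw [← prod_blk (fun m => ∏ a, if a ≤ m then zdet x0.2 a else 1)]
  exact Finset.prod_congr rfl fun i _ => detSub (fun a => a ≤ blk i) x0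

lemma det_Llin {n : ℕ} (x0 : XX n) :
    LinearMap.det (Llin x0) = ∏ m : Fin n, (∏ a, if m ≤ a then zdet x0.2 a else 1) ^ 2 := by
  rw [← LinearMap.det_conj (Llin x0) (eL n)]
  have : ((eL n).toLinearMap ∘ₗ Llin x0 ∘ₗ (eL n).symm.toLinearMap) =
    Matrix.toLin' (Matrix.blockDiagonal' (fun i : Fin (2*n) => 
      ((Bm x0).submatrix (Subtype.val : {k // blk i ≤ blk k} → _) Subtype.val))) := by
    refine LinearMap.ext fun y => ?_
    obtain ⟨x, rfl⟩ := (eL n).surjective y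
    ext ⟨j, i, h⟩
    simp only [LinearMap.comp_apply, LinearEquiv.coe_coe, LinearEquiv.symm_apply_apply,
      Matrix.toLin'_apply, Matrix.mulVec, dotProduct]
    simp only [eL, LinearEquiv.coe_mk, LinearMap.coe_mk, AddHom.coe_mk, Bm_Llin,
      Matrix.blockDiagonal'_apply, Fintype.sum_sigma]
    rw [Finset.sum_eq_single j]
    · simp only [dite_true, cast_eq, Matrix.submatrix_apply, Matrix.mul_apply]
      rw [sum_sub (fun k => blk j ≤ blk k)]
      intro k hk
      rw [(low_iff _).1 (Bm_low x) k j (not_le.1 hk), mul_zero]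
    · intro k _ hk
      simp [Ne.symm hk]
    · simp
  rw [this, LinearMap.det_toLin', det_blockDiag']
  rw [← prod_blk (fun m => ∏ a, if m ≤ a then zdet x0.2 a else 1)]
  exact Finset.prod_congr rfl fun i _ => detSub (fun a => blk i ≤ a) x0

/-- full matrix space maps -/
def mulL {n : ℕ} (g : Mx n) : MM n →ₗ[ℝ] MM n := LinearMap.mulLeft ℝ (A := Mx n) g
def mulR {n : ℕ} (g : Mx n) : MM n →ₗ[ℝ] MM n := LinearMap.mulRight ℝ (A := Mx n) g

def eF (n : ℕ) : MM n ≃ₗ[ℝ] (Fin (2*n) × Fin (2*n) → ℝ) where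
  toFun u p := u p.1 p.2
  invFun y i j := y (i, j)
  map_add' _ _ := rfl
  map_smul' _ _ := rfl
  left_inv _ := rfl
  right_inv _ := rfl
def eG (n : ℕ) : MM n ≃ₗ[ℝ] (Fin (2*n) × Fin (2*n) → ℝ) where
  toFun u p := u p.2 p.1
  invFun y i j := y (j, i)
  map_add' _ _ := rfl
  map_smul' _ _ := rfl
  left_inv _ := rfl
  right_inv _ := rfl

lemma det_mulL {n : ℕ} (g : Mx n) : LinearMap.det (mulL g) = g.det ^ (2 * n) := by
  rw [← LinearMap.det_conj (mulL g) (eF n)]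
  have : ((eF n : MM n →ₗ[ℝ] _) ∘ₗ mulL g ∘ₗ ((eF n).symm : _ →ₗ[ℝ] MM n)) =
    Matrix.toLin' (Matrix.blockDiagonal (fun _ : Fin (2*n) => g)) := by
    refine LinearMap.ext fun y => ?_
    ext ⟨i, j⟩
    simp only [Matrix.toLin'_apply, Matrix.mulVec, dotProduct, Matrix.blockDiagonal_apply,
      Fintype.sum_prod_type]
    simp only [ite_mul, zero_mul, Finset.sum_ite_eq, Finset.mem_univ, if_true]
    rfl
  rw [this, LinearMap.det_toLin', Matrix.det_blockDiagonal]
  simp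

lemma det_mulR {n : ℕ} (g : Mx n) : LinearMap.det (mulR g) = g.det ^ (2 * n) := by
  rw [← LinearMap.det_conj (mulR g) (eG n)]
  have : ((eG n : MM n →ₗ[ℝ] _) ∘ₗ mulR g ∘ₗ ((eG n).symm : _ →ₗ[ℝ] MM n)) =
    Matrix.toLin' (Matrix.blockDiagonal (fun _ : Fin (2*n) => gᵀ)) := by
    refine LinearMap.ext fun y => ?_
    ext ⟨i, j⟩
    simp only [Matrix.toLin'_apply, Matrix.mulVec, dotProduct, Matrix.blockDiagonal_apply,
      Fintype.sum_prod_type]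
    simp only [ite_mul, zero_mul, Finset.sum_ite_eq, Finset.mem_univ, if_true]
    simp only [Matrix.transpose_apply, mul_comm (g _ _)]
    rfl
  rw [this, LinearMap.det_toLin', Matrix.det_blockDiagonal]
  simp

def Dm {n : ℕ} (g : Mx n) (j : Fin n) : ℝ :=
  ((g * gᵀ).submatrix
    (Fin.castLE (by have := j.isLt; omega : 2 * (j.val + 1) ≤ 2 * n))
    (Fin.castLE (by have := j.isLt; omega : 2 * (j.val + 1) ≤ 2 * n))).det

def cutEquiv {n : ℕ} (j : Fin n) : {k : Fin (2 * n) // blk k ≤ j} ≃ Fin (2 * (j.val + 1)) where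
  toFun k := ⟨k.1.val, by have := k.2; simp only [blk, Fin.le_def] at this; omega⟩
  invFun k := ⟨⟨k.val, by have := k.isLt; have := j.isLt; omega⟩, by
    simp only [blk, Fin.le_def]; have := k.isLt; omega⟩
  left_inv k := rfl
  right_inv k := rfl

lemma Dm_Bm {n : ℕ} (x : XX n) (j : Fin n) :
    Dm (Bm x) j = (∏ a, if a ≤ j then zdet x.2 a else 1) ^ 2 := by
  unfold Dm
  rw [← Matrix.det_submatrix_equiv_self (cutEquiv j)]
  have : ((Bm x * (Bm x)ᵀ).submatrix 
     (Fin.castLE (by have := j.isLt; omega : 2 * (j.val + 1) ≤ 2 * n))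
    (Fin.castLE (by have := j.isLt; omega : 2 * (j.val + 1) ≤ 2 * n))).submatrix (cutEquiv j) (cutEquiv j)
    = ((Bm x).submatrix (Subtype.val : {k // blk k ≤ j} → _) Subtype.val) * 
      ((Bm x).submatrix (Subtype.val : {k // blk k ≤ j} → _) Subtype.val)ᵀ := by
    ext p q
    simp only [Matrix.submatrix_apply, Matrix.mul_apply, Matrix.transpose_apply]
    rw [sum_sub (fun k => blk k ≤ j)]
    · rfl
    · intro k hk
      exact mul_eq_zero_of_left ((low_iff _).1 (Bm_low x) p.1 k
        (lt_of_le_of_lt p.2 (not_le.1 hk) : blk p.1 < blk k)) _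
  rw [this, Matrix.det_mul, Matrix.det_transpose, detSub (fun a => a ≤ j) x, sq]

lemma Dm_mul_orth {n : ℕ} (g k : Mx n) (hk : k ∈ Matrix.orthogonalGroup (Fin (2*n)) ℝ) (j : Fin n) :
    Dm (g * k) j = Dm g j := by
  have : (g * k) * (g * k)ᵀ = g * gᵀ := by
    rw [Matrix.transpose_mul, Matrix.mul_assoc, ← Matrix.mul_assoc k]
    have h : k * kᵀ = 1 := (Matrix.mem_orthogonalGroup_iff (Fin (2*n)) ℝ).1 hk
    rw [h, Matrix.one_mul]
  unfold Dm; rw [this]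

lemma exists_decomp {n : ℕ} (g : Mx n) (hg : g.det ≠ 0) :
    ∃ (x : XX n) (k : Mx n), k ∈ Matrix.orthogonalGroup (Fin (2*n)) ℝ ∧ g = Bm x * k := by
  have hS : (g * gᵀ).PosDef := by
    have : IsUnit g := (Matrix.isUnit_iff_isUnit_det g).2 (isUnit_iff_ne_zero.2 hg)
    rw [← Matrix.conjTranspose_eq_transpose_of_trivial]
    rw [(Matrix.posSemidef_self_mul_conjTranspose g).posDef_iff_isUnit]
    exact this.mul ((Matrix.isUnit_conjTranspose g).2 this)
  set U := LDL.lowerInv hS with hU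
  have hUdet : U.det ≠ 0 := (Matrix.isUnit_det_of_invertible U).ne_zero
  have hUlow : Low U := by
    intro i j hij
    refine LDL.lowerInv_triangular hS ?_
    have : blk i < blk j := hij
    simp only [blk, Fin.lt_def] at this ⊢
    omega
  have hD := LDL.diag_eq_lowerInv_conj hS
  rw [← hU, Matrix.conjTranspose_eq_transpose_of_trivial] at hD
  set d := LDL.diagEntries hS with hd
  have hD' : (U * g) * (U * g)ᵀ = Matrix.diagonal d := by
    rw [show Matrix.diagonal d = LDL.diag hS from rfl, hD, Matrix.transpose_mul]
    simp only [Matrix.mul_assoc]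
  have hdpos : ∀ i, 0 < d i := by
    intro i
    have h1 : d i = ∑ k, (U * g) i k ^ 2 := by
      have := congrFun (congrFun hD' i) i
      rw [Matrix.diagonal_apply_eq, Matrix.mul_apply] at this
      rw [← this]; exact Finset.sum_congr rfl fun k _ => by rw [Matrix.transpose_apply, sq]
    have h2 : d i ≠ 0 := by
      intro h0
      have : (Matrix.diagonal d).det = 0 := by
        rw [Matrix.det_diagonal]; exact Finset.prod_eq_zero (Finset.mem_univ i) h0
      rw [← hD', Matrix.det_mul, Matrix.det_transpose, Matrix.det_mul] at this
      simp [hUdet, hg] at this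
    refine lt_of_le_of_ne ?_ h2.symm
    rw [h1]; exact Finset.sum_nonneg fun k _ => sq_nonneg _
  set V : Mx n := Matrix.diagonal (fun i => (Real.sqrt (d i))⁻¹) * U with hV
  have hVlow : Low V := by
    refine BlockTriangular.mul (Matrix.blockTriangular_diagonal _) hUlow
  have hVdet : V.det ≠ 0 := by
    rw [hV, Matrix.det_mul, Matrix.det_diagonal]
    refine mul_ne_zero (Finset.prod_ne_zero_iff.2 fun i _ => ?_) hUdet
    exact inv_ne_zero (Real.sqrt_pos.2 (hdpos i)).ne'
  have hVu : IsUnit V.det := isUnit_iff_ne_zero.2 hVdet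
  haveI : Invertible V := Matrix.invertibleOfIsUnitDet V hVu
  have hVi : Low V⁻¹ := Matrix.blockTriangular_inv_of_blockTriangular hVlow
  refine ⟨Em V⁻¹, V * g, ?_, ?_⟩
  · rw [Matrix.mem_orthogonalGroup_iff]
    change (V * g) * (V * g)ᵀ = 1
    have h3 : (V * g) * (V * g)ᵀ = Matrix.diagonal (fun i => (Real.sqrt (d i))⁻¹) *
        ((U * g) * (U * g)ᵀ) * (Matrix.diagonal (fun i => (Real.sqrt (d i))⁻¹))ᵀ := by
      rw [hV]; simp only [Matrix.transpose_mul, Matrix.mul_assoc]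
    rw [h3, hD',
      Matrix.diagonal_transpose, Matrix.diagonal_mul_diagonal, Matrix.diagonal_mul_diagonal, ← Matrix.diagonal_one]
    congr 1; ext i
    have h0 := (Real.sqrt_pos.2 (hdpos i)).ne'
    have h1 := Real.mul_self_sqrt (hdpos i).le
    field_simp
    nlinarith
  · rw [Bm_Em _ hVi, ← Matrix.mul_assoc, Matrix.nonsing_inv_mul _ hVu, Matrix.one_mul]

lemma prod_le {n : ℕ} (d : Fin n → ℝ) :
    ∏ m : Fin n, (∏ a, if a ≤ m then d a else 1) = ∏ a, d a ^ (n - a.val) := by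
  rw [Finset.prod_comm]
  refine Finset.prod_congr rfl fun a _ => ?_
  rw [Finset.prod_ite, Finset.prod_const, Finset.prod_const_one, mul_one]
  congr 1
  have : (Finset.univ.filter fun m => a ≤ m) = Finset.Ici a := by ext; simp
  rw [this, Fin.card_Ici]
lemma prod_ge {n : ℕ} (d : Fin n → ℝ) :
    ∏ m : Fin n, (∏ a, if m ≤ a then d a else 1) = ∏ a, d a ^ (a.val + 1) := by
  rw [Finset.prod_comm]
  refine Finset.prod_congr rfl fun a _ => ?_
  rw [Finset.prod_ite, Finset.prod_const, Finset.prod_const_one, mul_one]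
  congr 1
  have : (Finset.univ.filter fun m => m ≤ a) = Finset.Iic a := by ext; simp
  rw [this, Fin.card_Iic]

def rr {n : ℕ} (g : Mx n) : ℝ := ∏ j, Dm g j
def Jw {n : ℕ} (z : ZZ n) : ℝ := ∏ a : Fin n, (zdet z a ^ 2) ^ (n - 1 - a.val)

lemma rr_Bm {n : ℕ} (x : XX n) : rr (Bm x) = LinearMap.det (Rlin x) := by
  rw [det_Rlin]; exact Finset.prod_congr rfl fun j _ => Dm_Bm x j

lemma rr_Bm' {n : ℕ} (x : XX n) : rr (Bm x) = ∏ a : Fin n, (zdet x.2 a ^ 2) ^ (n - a.val) := by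
  rw [rr_Bm, det_Rlin, Finset.prod_pow, prod_le, ← Finset.prod_pow]
  exact Finset.prod_congr rfl fun a _ => by rw [← pow_mul, ← pow_mul, mul_comm]

lemma Llin_rr {n : ℕ} (x : XX n) : LinearMap.det (Llin x) * rr (Bm x) = (Bm x).det ^ (2 * (n + 1)) := by
  rw [rr_Bm', det_Llin, Finset.prod_pow, prod_ge, ← Finset.prod_pow, det_Bm, ← Finset.prod_pow,
    ← Finset.prod_mul_distrib]
  refine Finset.prod_congr rfl fun a _ => ?_
  rw [← pow_mul, ← pow_mul, ← pow_add]
  congr 1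
  have := a.isLt
  rw [mul_comm, ← mul_add]; congr 1; omega

lemma Jw_rr {n : ℕ} (x : XX n) : Jw x.2 * (Bm x).det ^ 2 = rr (Bm x) := by
  rw [rr_Bm', det_Bm, Jw, ← Finset.prod_pow, ← Finset.prod_mul_distrib]
  refine Finset.prod_congr rfl fun a _ => ?_
  rw [← pow_succ]
  congr 1
  have := a.isLt
  omega

/-- block scaling -/
def Cl {n : ℕ} (z : ZZ n) : CC n →ₗ[ℝ] CC n where
  toFun c ij p q := ∑ r, c ij p r * z ij.1.2 r q
  map_add' c c' := by ext ij p q; simp [add_mul]; ring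
  map_smul' t c := by ext ij p q; simp [Finset.mul_sum, mul_assoc]; ring

def eC (n : ℕ) : CC n ≃ₗ[ℝ] (Fin 2 × ({ij : Fin n × Fin n // ij.2 < ij.1} × Fin 2) → ℝ) where
  toFun u p := u p.2.1 p.2.2 p.1
  invFun y ij p q := y (q, ij, p)
  map_add' _ _ := rfl
  map_smul' _ _ := rfl
  left_inv _ := rfl
  right_inv _ := rfl

lemma det_Cl {n : ℕ} (z : ZZ n) : LinearMap.det (Cl z) = Jw z := by
  rw [← LinearMap.det_conj (Cl z) (eC n)]
  have : ((eC n).toLinearMap ∘ₗ Cl z ∘ₗ (eC n).symm.toLinearMap) =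
    Matrix.toLin' (Matrix.blockDiagonal 
      (fun o : {ij : Fin n × Fin n // ij.2 < ij.1} × Fin 2 => (Matrix.of (z o.1.1.2))ᵀ)) := by
    refine LinearMap.ext fun y => ?_
    ext ⟨q, ij, p⟩
    simp only [Matrix.toLin'_apply, Matrix.mulVec, dotProduct, Matrix.blockDiagonal_apply]
    rw [Fintype.sum_prod_type (fun i : Fin 2 × ({ij : Fin n × Fin n // ij.2 < ij.1} × Fin 2) => _)]
    simp only [ite_mul, zero_mul, Finset.sum_ite_eq, Finset.mem_univ, if_true]
    simp only [Matrix.transpose_apply, Matrix.of_apply, mul_comm (z _ _ _)]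
    rfl
  rw [this, LinearMap.det_toLin', Matrix.det_blockDiagonal]
  simp only [Matrix.det_transpose]
  rw [Fintype.prod_prod_type (fun o : {ij : Fin n × Fin n // ij.2 < ij.1} × Fin 2 => _)]
  simp only [Finset.prod_const, Finset.card_univ, Fintype.card_fin]
  have h1 : ∏ ij : {ij : Fin n × Fin n // ij.2 < ij.1}, (Matrix.of (z ij.1.2)).det ^ 2
     = ∏ ij ∈ Finset.univ.filter (fun ij : Fin n × Fin n => ij.2 < ij.1), zdet z ij.2 ^ 2 :=
    (Finset.prod_subtype (Finset.univ.filter (fun ij : Fin n × Fin n => ij.2 < ij.1)) (by simp)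
      (fun ij => zdet z ij.2 ^ 2)).symm
  rw [h1, Finset.prod_filter, Fintype.prod_prod_type_right, Jw]
  refine Finset.prod_congr rfl fun a _ => ?_
  simp only
  rw [Finset.prod_ite, Finset.prod_const, Finset.prod_const_one, mul_one]
  congr 1
  have : (Finset.univ.filter fun m => a < m) = Finset.Ioi a := by ext; simp
  rw [this, Fin.card_Ioi]

lemma Bm_Cl {n : ℕ} (c : CC n) (z : ZZ n) : Bm (Cl z c, z) = Tmat c * Zmat z := by
  ext i j
  rw [Matrix.mul_apply, ← (idxEquiv n).sum_comp, Fintype.sum_prod_type, Finset.sum_eq_single (blk j)]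
  · have hT : ∀ q, Zmat z (idxEquiv n (blk j, q)) j = z (blk j) q (par j) := by
      intro q
      have h1 : Zmat z (idxEquiv n (blk j, q)) j = if blk (idx (blk j) q) = blk j then 
        z (blk (idx (blk j) q)) (par (idx (blk j) q)) (par j) else 0 := by
        simp only [Zmat, Matrix.of_apply, Fin.ext_iff]; rfl
      rw [h1]; simp
    simp only [hT]
    have hT' : ∀ q, Tmat c i (idxEquiv n (blk j, q)) = if h : blk j < blk i then 
        c ⟨(blk i, blk j), h⟩ (par i) q else if blk i = blk j then (if par i = q then 1 else 0) else 0 := by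
      intro q
      have h1 : Tmat c i (idxEquiv n (blk j, q)) = if h : blk (idx (blk j) q) < blk i then 
        c ⟨(blk i, blk (idx (blk j) q)), h⟩ (par i) (par (idx (blk j) q)) else
         if blk i = blk (idx (blk j) q) then (if par i = par (idx (blk j) q) then 1 else 0) else 0 := by
        simp only [Tmat, Matrix.of_apply, Fin.ext_iff]; rfl
      rw [h1]; simp
    simp only [hT', Bm_apply]
    split_ifs with h1 h2
    · rfl
    · simp [h2]
    · simp
  · intro b _ hb
    refine Finset.sum_eq_zero fun q _ => ?_
    have h1 : Zmat z (idxEquiv n (b, q)) j = if blk (idx b q) = blk j then 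
        z (blk (idx b q)) (par (idx b q)) (par j) else 0 := by
        simp only [Zmat, Matrix.of_apply, Fin.ext_iff]; rfl
    rw [h1]; simp [hb]
  · simp

lemma lintegral_lin {E : Type*} [NormedAddCommGroup E] [NormedSpace ℝ E] [MeasurableSpace E]
    [BorelSpace E] [FiniteDimensional ℝ E] (μ : Measure E) [μ.IsAddHaarMeasure]
    (f : E →ₗ[ℝ] E) (hf : LinearMap.det f ≠ 0) (F : E → ENNReal) (hF : Measurable F) :
    ∫⁻ x, F (f x) ∂μ = ENNReal.ofReal |(LinearMap.det f)⁻¹| * ∫⁻ x, F x ∂μ := by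
  have h := Measure.map_linearMap_addHaar_eq_smul_addHaar μ hf
  rw [← lintegral_map hF (LinearMap.continuous_of_finiteDimensional f).measurable, h,
    lintegral_smul_measure, smul_eq_mul]

instance haar2 {ι κ : Type*} [Fintype ι] [Fintype κ] : (volume : Measure (ι → κ → ℝ)).IsAddHaarMeasure := by
  have h1 : (volume : Measure (κ → ℝ)).IsAddHaarMeasure := inferInstance
  exact Measure.pi.isAddHaarMeasure (fun _ : ι => (volume : Measure (κ → ℝ)))
instance haar3 {ι : Type*} [Fintype ι] : (volume : Measure (ι → Fin 2 → Fin 2 → ℝ)).IsAddHaarMeasure := by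
  exact Measure.pi.isAddHaarMeasure (fun _ : ι => (volume : Measure (Fin 2 → Fin 2 → ℝ)))
instance XX_haar (n : ℕ) : (volume : Measure (XX n)).IsAddHaarMeasure := 
  Measure.prod.instIsAddHaarMeasure (volume : Measure (CC n)) (volume : Measure (ZZ n))
instance XX_sf (n : ℕ) : SFinite (volume : Measure (XX n)) := 
  Measure.prod.instSFinite (μ := (volume : Measure (CC n))) (ν := (volume : Measure (ZZ n)))

lemma meas_mat {α : Type*} [MeasurableSpace α] {l : Type*} [Fintype l] (f : α → Matrix l l ℝ)
    (h : ∀ i j, Measurable fun a => f a i j) : Measurable f :=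
  measurable_pi_iff.2 fun i => measurable_pi_iff.2 fun j => h i j

lemma meas_entry {α : Type*} [MeasurableSpace α] {l : Type*} [Fintype l] {f : α → Matrix l l ℝ}
    (h : Measurable f) (i j : l) : Measurable fun a => f a i j :=
  (measurable_pi_apply j).comp ((measurable_pi_apply i).comp h)

lemma meas_mul {α : Type*} [MeasurableSpace α] {l : Type*} [Fintype l] {f g : α → Matrix l l ℝ}
    (hf : Measurable f) (hg : Measurable g) : Measurable fun a => f a * g a := by
  refine meas_mat _ fun i j => ?_
  simp only [Matrix.mul_apply]
  exact Finset.measurable_sum _ fun k _ => (meas_entry hf i k).mul (meas_entry hg k j)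

lemma meas_tr {α : Type*} [MeasurableSpace α] {l : Type*} [Fintype l] {f : α → Matrix l l ℝ}
    (hf : Measurable f) : Measurable fun a => (f a)ᵀ :=
  meas_mat _ fun i j => meas_entry hf j i

lemma meas_det {α : Type*} [MeasurableSpace α] {l : Type*} [Fintype l] [DecidableEq l]
    {f : α → Matrix l l ℝ} (hf : Measurable f) : Measurable fun a => (f a).det := by
  simp only [Matrix.det_apply]
  refine Finset.measurable_sum _ fun s _ => ?_
  refine Measurable.const_smul ?_ _
  exact Finset.measurable_prod _ fun i _ => meas_entry hf _ _

lemma meas_inv {α : Type*} [MeasurableSpace α] {l : Type*} [Fintype l] [DecidableEq l]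
    {f : α → Matrix l l ℝ} (hf : Measurable f) : Measurable fun a => (f a)⁻¹ := by
  refine meas_mat _ fun i j => ?_
  simp only [Matrix.inv_def, Matrix.smul_apply, Ring.inverse_eq_inv', smul_eq_mul, Matrix.adjugate_apply]
  refine (meas_det hf).inv.mul (meas_det (meas_mat _ fun p q => ?_))
  by_cases h : p = j
  · subst h; simp only [Matrix.updateRow_self]; exact measurable_const
  · simp only [Matrix.updateRow_ne h]; exact meas_entry hf p q

lemma meas_of {n : ℕ} : Measurable (fun u : MM n => (Matrix.of u : Mx n)) := 
  meas_mat _ fun i j => (measurable_pi_apply j).comp (measurable_pi_apply i)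

lemma meas_Bm {n : ℕ} : Measurable (fun x : XX n => Bm x) := by
  refine meas_mat _ fun i j => ?_
  simp only [Bm_apply]
  split_ifs
  · fun_prop
  · fun_prop
  · exact measurable_const

lemma meas_Dm {α : Type*} [MeasurableSpace α] {n : ℕ} {f : α → Mx n} (hf : Measurable f) (j : Fin n) :
    Measurable fun a => Dm (f a) j := by
  unfold Dm
  exact meas_det (meas_mat _ fun p q => meas_entry (meas_mul hf (meas_tr hf)) _ _)

lemma meas_rr {α : Type*} [MeasurableSpace α] {n : ℕ} {f : α → Mx n} (hf : Measurable f) :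
    Measurable fun a => rr (f a) := by
  unfold rr
  exact Finset.measurable_prod _ fun j _ => meas_Dm hf j

lemma ae_det {l : Type*} [Fintype l] [DecidableEq l] [Nonempty l] :
    ∀ᵐ u : l → l → ℝ, (Matrix.of u).det ≠ 0 := by
  have hm : Measurable fun u : l → l → ℝ => (Matrix.of u).det :=
    meas_det (meas_mat _ fun i j => (measurable_pi_apply j).comp (measurable_pi_apply i))
  set N : Set (l → l → ℝ) := {u | (Matrix.of u).det = 0} with hN
  have hNm : MeasurableSet N := hm (measurableSet_singleton 0)
  set I : l → l → ℝ := (1 : Matrix l l ℝ) with hI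
  have hms : MeasurableSet {p : (l → l → ℝ) × ℝ | p.1 + p.2 • I ∈ N} := by
    refine (measurable_fst.add (measurable_snd.smul_const I)) hNm
  have h1 : ∀ u : l → l → ℝ, volume {t : ℝ | u + t • I ∈ N} = 0 := by
    intro u
    refine Set.Finite.measure_zero ?_ _
    have hp : (Matrix.charpoly (-(Matrix.of u))) ≠ 0 := (Matrix.charpoly_monic _).ne_zero
    refine (Polynomial.finite_setOf_isRoot hp).subset fun t ht => ?_
    have ht : (Matrix.of (u + t • I)).det = 0 := ht
    change Polynomial.eval t _ = 0
    rw [Matrix.eval_charpoly, ← ht]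
    congr 1
    ext i j
    have h5 : (Matrix.of (u + t • I)) i j = u i j + t * (1 : Matrix l l ℝ) i j := rfl
    rw [h5]
    simp [Matrix.one_apply, Matrix.diagonal_apply]
    ring
  have h2 : ∀ t : ℝ, volume {u : l → l → ℝ | u + t • I ∈ N} = volume N := by
    intro t
    exact measure_preimage_add_right volume (t • I) N
  have h3 : (volume.prod volume) {p : (l → l → ℝ) × ℝ | p.1 + p.2 • I ∈ N} = 0 := by
    rw [Measure.prod_apply hms]
    simp only [Set.preimage_setOf_eq, h1, lintegral_zero]
  rw [Measure.prod_apply_symm hms] at h3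
  simp only [Set.preimage_setOf_eq, h2, lintegral_const, Real.volume_univ] at h3
  have : volume N = 0 := by
    by_contra hne
    rw [ENNReal.mul_top hne] at h3
    exact ENNReal.top_ne_zero h3
  rw [ae_iff]; simpa [hN] using this

lemma ae_zdet (n : ℕ) : ∀ᵐ z : ZZ n, ∀ a, zdet z a ≠ 0 := by
  rw [ae_all_iff]
  intro a
  have := (Measure.quasiMeasurePreserving_eval (μ := fun _ : Fin n => (volume : Measure (Fin 2 → Fin 2 → ℝ))) a).ae
    (ae_det (l := Fin 2))
  exact this

lemma ae_zdetX (n : ℕ) : ∀ᵐ x : XX n, ∀ a, zdet x.2 a ≠ 0 :=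
  (Measure.quasiMeasurePreserving_snd (μ := (volume : Measure (CC n))) (ν := (volume : Measure (ZZ n)))).ae (ae_zdet n)

lemma ae_detX (n : ℕ) : ∀ᵐ x : XX n, (Bm x).det ≠ 0 := by
  filter_upwards [ae_zdetX n] with x hx
  rw [det_Bm]; exact Finset.prod_ne_zero_iff.2 fun a _ => hx a

lemma ae_detM (n : ℕ) (hn : 1 ≤ n) : ∀ᵐ u : MM n, (Matrix.of u).det ≠ 0 := by
  haveI : Nonempty (Fin (2 * n)) := ⟨⟨0, by omega⟩⟩
  exact ae_det

def RInv {n : ℕ} {β : Type*} (F : Mx n → β) : Prop :=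
  ∀ g, ∀ k ∈ Matrix.orthogonalGroup (Fin (2 * n)) ℝ, F (g * k) = F g

lemma rr_rinv {n : ℕ} : RInv (rr : Mx n → ℝ) := fun g k hk =>
  Finset.prod_congr rfl fun j _ => Dm_mul_orth g k hk j

lemma orth_det {n : ℕ} {k : Mx n} (hk : k ∈ Matrix.orthogonalGroup (Fin (2 * n)) ℝ) : k.det ^ 2 = 1 := by
  have h : k * kᵀ = 1 := (Matrix.mem_orthogonalGroup_iff (Fin (2*n)) ℝ).1 hk
  have := congrArg Matrix.det h
  rwa [Matrix.det_mul, Matrix.det_transpose, Matrix.det_one, ← sq] at this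

lemma detsq_rinv {n : ℕ} : RInv (fun g : Mx n => g.det ^ 2) := fun g k hk => by
  simp only [Matrix.det_mul, mul_pow, orth_det hk, mul_one]

def ll {n : ℕ} (g : Mx n) : ℝ := (g.det ^ 2) ^ (n + 1) / rr g
def om {n : ℕ} (g : Mx n) : ℝ := ((g.det ^ 2) ^ n)⁻¹

lemma rr_pos {n : ℕ} (g : Mx n) (hg : g.det ≠ 0) : 0 < rr g := by
  obtain ⟨x, k, hk, rfl⟩ := exists_decomp g hg
  rw [rr_rinv _ k hk, rr_Bm']
  rw [Matrix.det_mul, det_Bm] at hg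
  have h := Finset.prod_ne_zero_iff.1 (left_ne_zero_of_mul hg)
  exact Finset.prod_pos fun a ha => by have := h a ha; positivity

lemma det_ne_of {n : ℕ} {x : XX n} {k : Mx n} (hg : (Bm x * k).det ≠ 0) : (Bm x).det ≠ 0 := by
  rw [Matrix.det_mul] at hg; exact left_ne_zero_of_mul hg

lemma step1 {n : ℕ} (Φ : Mx n → ENNReal) (hΦ : Measurable Φ) (hi : RInv Φ) (g : Mx n) (hg : g.det ≠ 0) :
    ∫⁻ x : XX n, Φ (Bm x * g) = ENNReal.ofReal (rr g)⁻¹ * ∫⁻ x : XX n, Φ (Bm x) := by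
  have hr := rr_pos g hg
  obtain ⟨x0, k, hk, rfl⟩ := exists_decomp g hg
  rw [rr_rinv _ k hk] at hr ⊢
  rw [rr_Bm] at hr ⊢
  have := lintegral_lin (volume : Measure (XX n)) (Rlin x0) hr.ne' (fun x => Φ (Bm x)) (hΦ.comp meas_Bm)
  simp only [Bm_Rlin] at this
  rw [abs_of_pos (inv_pos.2 hr)] at this
  rw [← this]
  refine lintegral_congr fun x => ?_
  rw [← Matrix.mul_assoc, hi _ k hk]

lemma step2 {n : ℕ} (w : Mx n → ENNReal) (hw : Measurable w) (hi : RInv w) (g : Mx n) (hg : g.det ≠ 0) :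
    ∫⁻ x : XX n, w ((Bm x)⁻¹ * g) = ENNReal.ofReal (ll g) * ∫⁻ x : XX n, w ((Bm x)⁻¹) := by
  have hr := rr_pos g hg
  obtain ⟨x0, k, hk, rfl⟩ := exists_decomp g hg
  have hd := det_ne_of hg
  have hl : ll (Bm x0 * k) = LinearMap.det (Llin x0) := by
    have hr' := hr
    rw [rr_rinv _ k hk] at hr'
    have h2 : (Bm x0 * k).det ^ 2 = (Bm x0).det ^ 2 := detsq_rinv _ k hk
    unfold ll
    rw [rr_rinv _ k hk, h2, ← pow_mul, ← Llin_rr, mul_div_assoc, div_self hr'.ne', mul_one]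
  have hlp : 0 < LinearMap.det (Llin x0) := by
    rw [← hl]; unfold ll
    have : 0 < (Bm x0 * k).det ^ 2 := by positivity
    positivity
  rw [hl]
  have := lintegral_lin (volume : Measure (XX n)) (Llin x0) hlp.ne' (fun x => w ((Bm x)⁻¹ * Bm x0)) 
    (hw.comp (meas_mul (meas_inv meas_Bm) measurable_const))
  have h3 : ∀ x, (Bm (Llin x0 x))⁻¹ * Bm x0 = (Bm x)⁻¹ := by
    intro x
    rw [Bm_Llin, Matrix.mul_inv_rev, Matrix.nonsing_inv_mul_cancel_right _ _ (isUnit_iff_ne_zero.2 hd)]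
  simp only [h3] at this
  rw [this, ← mul_assoc, abs_of_pos (inv_pos.2 hlp), ← ENNReal.ofReal_mul hlp.le, mul_inv_cancel₀ hlp.ne',
    ENNReal.ofReal_one, one_mul]
  refine lintegral_congr fun x => ?_
  rw [← Matrix.mul_assoc, hi _ k hk]

lemma step3 {n : ℕ} (Φ w : Mx n → ENNReal) (hΦ : Measurable Φ) (hw : Measurable w) (b : Mx n) (hb : b.det ≠ 0) :
    ∫⁻ u : MM n, Φ (b * Matrix.of u) * w (Matrix.of u) * ENNReal.ofReal (om (Matrix.of u)) = 
    ∫⁻ u : MM n, Φ (Matrix.of u) * w (b⁻¹ * Matrix.of u) * ENNReal.ofReal (om (Matrix.of u)) := by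
  have hdet : LinearMap.det (mulL b) ≠ 0 := by rw [det_mulL]; positivity
  have hbp : 0 < (LinearMap.det (mulL b))⁻¹ := by
    rw [det_mulL, pow_mul]; positivity
  have hom : Measurable (fun u : MM n => om (Matrix.of u)) := by
    unfold om; exact (((meas_det meas_of).pow_const 2).pow_const n).inv
  have := lintegral_lin (volume : Measure (MM n)) (mulL b) hdet
    (fun u => Φ (Matrix.of u) * w (b⁻¹ * Matrix.of u) * ENNReal.ofReal (om (Matrix.of u)))
    (((hΦ.comp meas_of).mul (hw.comp (meas_mul measurable_const meas_of))).mul hom.ennreal_ofReal)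
  rw [abs_of_pos hbp] at this
  have h3 : ∀ u : MM n, (Matrix.of (mulL b u)) = b * Matrix.of u := fun u => rfl
  have h4 : ∀ u : MM n, om (b * Matrix.of u) = (LinearMap.det (mulL b))⁻¹ * om (Matrix.of u) := by
    intro u; rw [det_mulL, om, om, Matrix.det_mul, mul_pow, mul_pow, mul_inv, pow_mul]
  simp only [h3, h4, Matrix.nonsing_inv_mul_cancel_left _ _ (isUnit_iff_ne_zero.2 hb), ENNReal.ofReal_mul hbp.le] at this
  have h5 : ENNReal.ofReal (LinearMap.det (mulL b))⁻¹ ≠ 0 := by simpa using hbp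
  rw [← ENNReal.mul_right_inj h5 ENNReal.ofReal_ne_top, ← this, ← lintegral_const_mul' _ _ ENNReal.ofReal_ne_top]
  refine lintegral_congr fun u => ?_
  ring

lemma meas_om {n : ℕ} : Measurable (fun u : MM n => om (Matrix.of u)) := by
    unfold om; exact (((meas_det meas_of).pow_const 2).pow_const n).inv

lemma core0 {n : ℕ} (hn : 1 ≤ n) (Φ w : Mx n → ENNReal) (hΦ : Measurable Φ) (hw : Measurable w) (hΦi : RInv Φ)
    (hwi : RInv w) :
    (∫⁻ x : XX n, Φ (Bm x)) * ∫⁻ u : MM n, w (Matrix.of u) * ENNReal.ofReal (rr (Matrix.of u))⁻¹ * 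
        ENNReal.ofReal (om (Matrix.of u)) =
    (∫⁻ x : XX n, w ((Bm x)⁻¹)) * ∫⁻ u : MM n, Φ (Matrix.of u) * ENNReal.ofReal (ll (Matrix.of u)) * 
        ENNReal.ofReal (om (Matrix.of u)) := by
  have hll : Measurable (fun u : MM n => ll (Matrix.of u)) := by
    unfold ll; exact (((meas_det meas_of).pow_const 2).pow_const _).div (meas_rr meas_of)
  calc _ = ∫⁻ u : MM n, (∫⁻ x : XX n, Φ (Bm x * Matrix.of u)) * (w (Matrix.of u) * ENNReal.ofReal (om (Matrix.of u))) := by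
        rw [← lintegral_const_mul]
        · refine lintegral_congr_ae ?_
          filter_upwards [ae_detM n hn] with u hu
          rw [step1 Φ hΦ hΦi _ hu]; ring
        · exact ((hw.comp meas_of).mul (meas_rr meas_of).inv.ennreal_ofReal).mul meas_om.ennreal_ofReal
    _ = ∫⁻ u : MM n, ∫⁻ x : XX n, Φ (Bm x * Matrix.of u) * w (Matrix.of u) * ENNReal.ofReal (om (Matrix.of u)) := by
        refine lintegral_congr fun u => ?_
        rw [← lintegral_mul_const]
        · exact lintegral_congr fun x => by ring
        · exact hΦ.comp (meas_mul meas_Bm measurable_const)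
    _ = ∫⁻ x : XX n, ∫⁻ u : MM n, Φ (Bm x * Matrix.of u) * w (Matrix.of u) * ENNReal.ofReal (om (Matrix.of u)) := by
        refine lintegral_lintegral_swap ?_
        refine Measurable.aemeasurable ?_
        refine ((hΦ.comp (meas_mul (meas_Bm.comp measurable_snd) (meas_of.comp measurable_fst))).mul
          (hw.comp (meas_of.comp measurable_fst))).mul (meas_om.comp measurable_fst).ennreal_ofReal
    _ = ∫⁻ x : XX n, ∫⁻ u : MM n, Φ (Matrix.of u) * w ((Bm x)⁻¹ * Matrix.of u) * ENNReal.ofReal (om (Matrix.of u)) := by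
        refine lintegral_congr_ae ?_
        filter_upwards [ae_detX n] with x hx
        exact step3 Φ w hΦ hw _ hx
    _ = ∫⁻ u : MM n, ∫⁻ x : XX n, Φ (Matrix.of u) * w ((Bm x)⁻¹ * Matrix.of u) * ENNReal.ofReal (om (Matrix.of u)) := by
        refine lintegral_lintegral_swap ?_
        refine Measurable.aemeasurable ?_
        refine ((hΦ.comp (meas_of.comp measurable_snd)).mul
          (hw.comp (meas_mul (meas_inv (meas_Bm.comp measurable_fst)) (meas_of.comp measurable_snd)))).mul 
           (meas_om.comp measurable_snd).ennreal_ofReal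
    _ = ∫⁻ u : MM n, (∫⁻ x : XX n, w ((Bm x)⁻¹ * Matrix.of u)) * (Φ (Matrix.of u) * ENNReal.ofReal (om (Matrix.of u))) := by
        refine lintegral_congr fun u => ?_
        rw [← lintegral_mul_const]
        · exact lintegral_congr fun x => by ring
        · exact hw.comp (meas_mul (meas_inv meas_Bm) measurable_const)
    _ = _ := by
        rw [← lintegral_const_mul]
        · refine lintegral_congr_ae ?_
          filter_upwards [ae_detM n hn] with u hu
          rw [step2 w hw hwi _ hu]; ring
        · exact ((hΦ.comp meas_of).mul hll.ennreal_ofReal).mul meas_om.ennreal_ofReal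

def nq {n : ℕ} (g : Mx n) : ℝ := (g * gᵀ).trace

lemma nq_eq {n : ℕ} (g : Mx n) : nq g = ∑ i, ∑ j, g i j ^ 2 := by
  unfold nq Matrix.trace
  simp [Matrix.mul_apply, sq]

lemma nq_rinv {n : ℕ} : RInv (nq : Mx n → ℝ) := fun g k hk => by
  have h : k * kᵀ = 1 := (Matrix.mem_orthogonalGroup_iff (Fin (2*n)) ℝ).1 hk
  unfold nq
  rw [Matrix.transpose_mul, Matrix.mul_assoc, ← Matrix.mul_assoc k, h, Matrix.one_mul]

lemma nq_entry {n : ℕ} {g : Mx n} (h : nq g ≤ 1) (i j) : |g i j| ≤ 1 := by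
  rw [nq_eq] at h
  rw [← sq_le_one_iff_abs_le_one]
  refine le_trans ?_ h
  refine le_trans ?_ (Finset.single_le_sum (f := fun i => ∑ j, g i j ^ 2) (fun i _ => Finset.sum_nonneg fun j _ => sq_nonneg _) (Finset.mem_univ i))
  exact Finset.single_le_sum (f := fun j => g i j ^ 2) (fun j _ => sq_nonneg _) (Finset.mem_univ j)

lemma meas_nq {n : ℕ} : Measurable (nq : Mx n → ℝ) := by
  have : (nq : Mx n → ℝ) = fun g => ∑ i, ∑ j, g i j ^ 2 := funext nq_eq
  rw [this]
  exact Finset.measurable_sum _ fun i _ => Finset.measurable_sum _ fun j _ => (meas_entry measurable_id i j).pow_const 2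

def bnd {n : ℕ} (g : Mx n) : ENNReal := if nq g ≤ 1 then 1 else 0

lemma meas_bind {n : ℕ} : Measurable (bnd : Mx n → ENNReal) :=
  Measurable.ite (measurableSet_le meas_nq measurable_const) measurable_const measurable_const

lemma bind_rinv {n : ℕ} : RInv (bnd : Mx n → ENNReal) := fun g k hk => by
  unfold bnd; rw [nq_rinv g k hk]

lemma V_ne_top (n : ℕ) : ∫⁻ u : MM n, bnd (Matrix.of u) ≠ ⊤ := by
  have : ∫⁻ u : MM n, bnd (Matrix.of u) ≤ ∫⁻ u : MM n, (Metric.closedBall (0 : MM n) 1).indicator 1 u := by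
    refine lintegral_mono fun u => ?_
    simp only [bnd]
    split_ifs with h
    · rw [Set.indicator_of_mem]
      · rfl
      · rw [mem_closedBall_zero_iff, pi_norm_le_iff_of_nonneg zero_le_one]
        intro i
        rw [pi_norm_le_iff_of_nonneg zero_le_one]
        intro j
        exact nq_entry h i j
    · exact bot_le
  refine (lt_of_le_of_lt this ?_).ne
  rw [lintegral_indicator_one Metric.isClosed_closedBall.measurableSet]
  exact (isCompact_closedBall _ _).measure_lt_top

lemma V_ne_zero (n : ℕ) : ∫⁻ u : MM n, bnd (Matrix.of u) ≠ 0 := by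
  set U : Set (MM n) := {u | ∑ i, ∑ j, u i j ^ 2 < 1} with hU
  have ho : IsOpen U := isOpen_lt (by fun_prop) continuous_const
  have hne : U.Nonempty := ⟨0, by simp [hU]⟩
  have h0 := ho.measure_pos volume hne
  have : ∫⁻ u : MM n, U.indicator 1 u ≤ ∫⁻ u : MM n, bnd (Matrix.of u) := by
    refine lintegral_mono fun u => ?_
    by_cases h : u ∈ U
    · rw [Set.indicator_of_mem h]
      have h2 : nq (Matrix.of u) ≤ 1 := by rw [nq_eq]; exact le_of_lt h
      simp [bnd, h2]
    · rw [Set.indicator_of_notMem h]; exact bot_le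
  rw [lintegral_indicator_one ho.measurableSet] at this
  exact (lt_of_lt_of_le h0 this).ne'

lemma cont_Jw (n : ℕ) : Continuous (fun x : XX n => Jw x.2) := by
  unfold Jw zdet
  simp only [Matrix.det_fin_two]
  fun_prop

lemma meas_Jw (n : ℕ) : Measurable (fun z : ZZ n => Jw z) := by
  have : Continuous (fun z : ZZ n => Jw z) := by
    unfold Jw zdet
    simp only [Matrix.det_fin_two]
    fun_prop
  exact this.measurable

lemma J_ne_top (n : ℕ) : ∫⁻ x : XX n, bnd (Bm x) * ENNReal.ofReal (Jw x.2) ≠ ⊤ := by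
  have : ∫⁻ x : XX n, bnd (Bm x) * ENNReal.ofReal (Jw x.2) ≤ 
     ∫⁻ x in (Metric.closedBall (0 : XX n) 1), ENNReal.ofReal (Jw x.2) := by
    rw [← lintegral_indicator Metric.isClosed_closedBall.measurableSet]
    refine lintegral_mono fun x => ?_
    simp only [bnd]
    split_ifs with h
    · rw [Set.indicator_of_mem]
      · simp
      · rw [mem_closedBall_zero_iff, ← Em_Bm x, Prod.norm_def, max_le_iff]
        constructor
        all_goals
          rw [pi_norm_le_iff_of_nonneg zero_le_one]
          intro i
          rw [pi_norm_le_iff_of_nonneg zero_le_one]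
          intro j
          rw [pi_norm_le_iff_of_nonneg zero_le_one]
          intro k
          exact nq_entry h _ _
    · simp
  refine (lt_of_le_of_lt this ?_).ne
  have hi : IntegrableOn (fun x : XX n => Jw x.2) (Metric.closedBall 0 1) volume :=
    (cont_Jw n).continuousOn.integrableOn_compact (isCompact_closedBall _ _)
  exact hi.lintegral_lt_top

lemma core1 {n : ℕ} (hn : 1 ≤ n) : ∃ C : ENNReal, C ≠ ⊤ ∧ ∀ F : Mx n → ENNReal, Measurable F → RInv F →
    ∫⁻ x : XX n, F (Bm x) * ENNReal.ofReal (Jw x.2) = C * ∫⁻ u : MM n, F (Matrix.of u) := by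
  set w : Mx n → ENNReal := fun g => bnd g * ENNReal.ofReal (rr g * (g.det ^ 2) ^ n) with hw
  have hwm : Measurable w := meas_bind.mul ((meas_rr measurable_id).mul (((meas_det measurable_id).pow_const 2).pow_const n)).ennreal_ofReal
  have hwi : RInv w := fun g k hk => by
    simp only [hw]; rw [bind_rinv g k hk, rr_rinv g k hk]
    have := detsq_rinv g k hk
    simp only at this
    rw [this]
  set V := ∫⁻ u : MM n, bnd (Matrix.of u) with hV
  set Q := ∫⁻ x : XX n, w ((Bm x)⁻¹) with hQ
  have key : ∀ F : Mx n → ENNReal, Measurable F → RInv F →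
    (∫⁻ x : XX n, F (Bm x) * ENNReal.ofReal (Jw x.2)) * V = Q * ∫⁻ u : MM n, F (Matrix.of u) := by
    intro F hF hi
    have h := core0 hn (fun g => F g * ENNReal.ofReal (rr g / g.det ^ 2)) w 
      (hF.mul ((meas_rr measurable_id).div ((meas_det measurable_id).pow_const 2)).ennreal_ofReal) hwm
      (fun g k hk => by
        simp only; rw [hi g k hk, rr_rinv g k hk]
        have := detsq_rinv g k hk
        simp only at this
        rw [this]) hwi
    have e1 : ∫⁻ x : XX n, F (Bm x) * ENNReal.ofReal (rr (Bm x) / (Bm x).det ^ 2) = 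
        ∫⁻ x : XX n, F (Bm x) * ENNReal.ofReal (Jw x.2) := by
      refine lintegral_congr_ae ?_
      filter_upwards [ae_detX n] with x hx
      rw [← Jw_rr, mul_div_cancel_right₀]
      positivity
    have e2 : ∫⁻ u : MM n, w (Matrix.of u) * ENNReal.ofReal (rr (Matrix.of u))⁻¹ * 
        ENNReal.ofReal (om (Matrix.of u)) = V := by
      refine lintegral_congr_ae ?_
      filter_upwards [ae_detM n hn] with u hu
      have hr := rr_pos _ hu
      simp only [hw, om]
      rw [mul_assoc, mul_assoc, ← ENNReal.ofReal_mul (by positivity), ← ENNReal.ofReal_mul (by positivity)]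
      have : rr (Matrix.of u) * (det (Matrix.of u) ^ 2) ^ n * ((rr (Matrix.of u))⁻¹ * ((det (Matrix.of u) ^ 2) ^ n)⁻¹) = 1 := by
        field_simp
        try ring
      rw [this]; simp
    have e3 : ∫⁻ u : MM n, (F (Matrix.of u) * ENNReal.ofReal (rr (Matrix.of u) / (Matrix.of u).det ^ 2)) * ENNReal.ofReal (ll (Matrix.of u)) * 
        ENNReal.ofReal (om (Matrix.of u)) = ∫⁻ u : MM n, F (Matrix.of u) := by
      refine lintegral_congr_ae ?_
      filter_upwards [ae_detM n hn] with u hu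
      have hr := rr_pos _ hu
      have hl : 0 ≤ ll (Matrix.of u) := by unfold ll; positivity
      rw [mul_assoc, mul_assoc, ← ENNReal.ofReal_mul hl, ← ENNReal.ofReal_mul (by positivity)]
      simp only [ll, om]
      have : rr (Matrix.of u) / det (Matrix.of u) ^ 2 * ((det (Matrix.of u) ^ 2) ^ (n + 1) / rr (Matrix.of u) * ((det (Matrix.of u) ^ 2) ^ n)⁻¹) = 1 := by
        have hd : (Matrix.of u).det ^ 2 ≠ 0 := pow_ne_zero _ hu
        field_simp
        try ring
      rw [this]; simp
    beta_reduce at h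
    rw [e1, e2, e3] at h
    exact h
  have hQ' : Q ≠ ⊤ := by
    have h := key bnd meas_bind bind_rinv
    have : Q * V ≠ ⊤ := by
      rw [← h]; exact ENNReal.mul_ne_top (J_ne_top n) (V_ne_top n)
    intro hq
    rw [hq, ENNReal.top_mul (V_ne_zero n)] at this
    exact this rfl
  refine ⟨Q / V, (ENNReal.div_lt_top hQ' (V_ne_zero n)).ne, fun F hF hi => ?_⟩
  have h := key F hF hi
  rw [ENNReal.div_eq_inv_mul, mul_assoc, ← h, mul_comm _ V, ← mul_assoc, ENNReal.inv_mul_cancel (V_ne_zero n) (V_ne_top n), one_mul]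

lemma meas_coe {n : ℕ} : Measurable (fun k : OG (2 * n) => (k : Mx n)) := measurable_subtype_coe

instance OG_measMul (n : ℕ) : MeasurableMul (OG (2 * n)) where
  measurable_const_mul c := by
    refine Measurable.subtype_mk ?_
    exact meas_mul measurable_const meas_coe
  measurable_mul_const c := by
    refine Measurable.subtype_mk ?_
    exact meas_mul meas_coe measurable_const

lemma abs_det_orth {n : ℕ} (k : OG (2 * n)) : (k : Mx n).det ^ (2 * n) = 1 := by
  rw [pow_mul, orth_det k.2, one_pow]

lemma lint_mulR {n : ℕ} (k : OG (2 * n)) (F : Mx n → ENNReal) (hF : Measurable F) :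
    ∫⁻ u : MM n, F (Matrix.of u * k) = ∫⁻ u : MM n, F (Matrix.of u) := by
  have h := lintegral_lin (volume : Measure (MM n)) (mulR (k : Mx n)) (by rw [det_mulR, abs_det_orth]; exact one_ne_zero)
    (fun u => F (Matrix.of u)) (hF.comp meas_of)
  rw [det_mulR, abs_det_orth] at h
  simp only [inv_one, abs_one, ENNReal.ofReal_one, one_mul] at h
  exact h

def Av {n : ℕ} (μ : Measure (OG (2 * n))) (p : Mx n → ENNReal) (g : Mx n) : ENNReal :=
  ∫⁻ k : OG (2 * n), p (g * k) ∂μ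

lemma meas_Av {n : ℕ} (μ : Measure (OG (2 * n))) [SFinite μ] (p : Mx n → ENNReal) (hp : Measurable p) :
    Measurable (Av μ p) := by
  have : Measurable (fun q : Mx n × OG (2 * n) => p (q.1 * q.2)) :=
    hp.comp (meas_mul measurable_fst (meas_coe.comp measurable_snd))
  exact this.lintegral_prod_right'

lemma Av_rinv {n : ℕ} (μ : Measure (OG (2 * n))) [μ.IsMulLeftInvariant] (p : Mx n → ENNReal) :
    RInv (Av μ p) := fun g k hk => by
  have := lintegral_mul_left_eq_self (μ := μ) (fun k' : OG (2 * n) => p (g * k')) (⟨k, hk⟩ : OG (2 * n))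
  unfold Av
  rw [← this]
  refine lintegral_congr fun k' => ?_
  rw [Submonoid.coe_mul, Matrix.mul_assoc]

lemma lint_Av {n : ℕ} (μ : Measure (OG (2 * n))) [IsProbabilityMeasure μ] (p : Mx n → ENNReal) (hp : Measurable p) :
    ∫⁻ u : MM n, Av μ p (Matrix.of u) = ∫⁻ u : MM n, p (Matrix.of u) := by
  unfold Av
  rw [lintegral_lintegral_swap]
  · simp_rw [lint_mulR _ p hp]
    simp
  · exact (hp.comp (meas_mul (meas_of.comp measurable_fst) (meas_coe.comp measurable_snd))).aemeasurable

def NI {n : ℕ} (N : Set (MM n)) (g : Mx n) : ENNReal := N.indicator 1 (g : MM n)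

lemma meas_NI {n : ℕ} (N : Set (MM n)) (hN : MeasurableSet N) : Measurable (NI N) :=
  (measurable_one.indicator hN)

lemma lint_NI {n : ℕ} (N : Set (MM n)) (hN : MeasurableSet N) (h0 : volume N = 0) :
    ∫⁻ u : MM n, NI N (Matrix.of u) = 0 := by
  have : ∫⁻ u : MM n, NI N (Matrix.of u) = ∫⁻ u : MM n, N.indicator 1 u := rfl
  rw [this, lintegral_indicator_one hN, h0]

lemma Av_ae {n : ℕ} (μ : Measure (OG (2 * n))) [IsProbabilityMeasure μ] (q : Mx n → Prop)
    (hq : ∀ᵐ u : MM n, q (Matrix.of u)) : ∀ᵐ u : MM n, ∀ᵐ k : OG (2 * n) ∂μ, q (Matrix.of u * k) := by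
  obtain ⟨N, hsub, hN, h0⟩ := exists_measurable_superset_of_null (ae_iff.1 hq)
  have h := lint_Av μ (NI N) (meas_NI N hN)
  rw [lint_NI N hN h0] at h
  replace h := (lintegral_eq_zero_iff ((meas_Av μ _ (meas_NI N hN)).comp meas_of)).1 h
  filter_upwards [h] with u hu
  have hu' : ∫⁻ k : OG (2 * n), NI N (Matrix.of u * k) ∂μ = 0 := hu
  replace hu' := (lintegral_eq_zero_iff ((meas_NI N hN).comp (meas_mul measurable_const meas_coe))).1 hu'
  filter_upwards [hu'] with k hk
  by_contra hc
  have hm : (Matrix.of u * (k : Mx n) : Mx n) ∈ N := hsub hc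
  have : NI N (Matrix.of u * (k : Mx n)) = 1 := Set.indicator_of_mem hm _
  simp [this] at hk

lemma zdet_Jw {n : ℕ} (z : ZZ n) (h : ∀ a, zdet z a ≠ 0) : 0 < Jw z :=
  Finset.prod_pos fun a _ => by have := h a; positivity

lemma ae_B {n : ℕ} (hn : 1 ≤ n) (μ : Measure (OG (2 * n))) [IsProbabilityMeasure μ] [μ.IsMulLeftInvariant]
    (q : Mx n → Prop) (hi : RInv q)
    (hq : ∀ᵐ u : MM n, q (Matrix.of u)) : ∀ᵐ x : XX n, q (Bm x) := by
  obtain ⟨N, hsub, hN, h0⟩ := exists_measurable_superset_of_null (ae_iff.1 hq)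
  obtain ⟨C, hC, hcore⟩ := core1 hn
  have h := hcore (Av μ (NI N)) (meas_Av μ _ (meas_NI N hN)) (Av_rinv μ _)
  rw [lint_Av μ (NI N) (meas_NI N hN), lint_NI N hN h0, mul_zero] at h
  replace h := (lintegral_eq_zero_iff
    (((meas_Av μ _ (meas_NI N hN)).comp meas_Bm).mul ((meas_Jw n).comp measurable_snd).ennreal_ofReal)).1 h
  filter_upwards [h, ae_zdetX n] with x hx hz
  by_contra hc
  have hA : Av μ (NI N) (Bm x) = 1 := by
    unfold Av
    have : ∀ k : OG (2 * n), NI N (Bm x * k) = 1 := fun k => by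
      have hm : (Bm x * (k : Mx n) : Mx n) ∈ N := hsub (by
        show ¬ q (Bm x * (k : Mx n))
        rw [hi _ k k.2]; exact hc)
      exact Set.indicator_of_mem hm _
    simp_rw [this]; simp
  have hJ := zdet_Jw _ hz
  have hx' : Av μ (NI N) (Bm x) * ENNReal.ofReal (Jw x.2) = 0 := hx
  rw [hA, one_mul, ENNReal.ofReal_eq_zero] at hx'
  exact absurd hJ (not_lt.2 hx')

lemma exists_tilde {n : ℕ} (hn : 1 ≤ n) (μ : Measure (OG (2 * n))) [IsProbabilityMeasure μ] [μ.IsMulLeftInvariant]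
    (p : Mx n → ENNReal) (hi : RInv p) (hp : AEMeasurable (fun u : MM n => p (Matrix.of u))) :
    ∃ Q : Mx n → ENNReal, Measurable Q ∧ RInv Q ∧ (∀ᵐ u : MM n, Q (Matrix.of u) = p (Matrix.of u)) ∧
      ∀ᵐ x : XX n, Q (Bm x) = p (Bm x) := by
  set p' : Mx n → ENNReal := fun g => hp.mk _ (g : MM n) with hp'
  have hm : Measurable p' := hp.measurable_mk
  have he : ∀ᵐ u : MM n, p (Matrix.of u) = p' (Matrix.of u) := hp.ae_eq_mk
  have h1 : ∀ᵐ u : MM n, Av μ p' (Matrix.of u) = p (Matrix.of u) := by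
    filter_upwards [Av_ae μ (fun g => p g = p' g) he] with u hu
    have : ∫⁻ k : OG (2 * n), p' (Matrix.of u * k) ∂μ = ∫⁻ k : OG (2 * n), p (Matrix.of u) ∂μ := by
      refine lintegral_congr_ae ?_
      filter_upwards [hu] with k hk
      rw [← hk, hi _ k k.2]
    unfold Av
    rw [this]; simp
  refine ⟨Av μ p', meas_Av μ _ hm, Av_rinv μ _, h1, ?_⟩
  refine ae_B hn μ (fun g => Av μ p' g = p g) (fun g k hk => ?_) h1
  simp only [Av_rinv μ p' g k hk, hi g k hk]

lemma cont_Bz {n : ℕ} (z : ZZ n) : Measurable (fun c : CC n => Bm (c, z)) :=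
  meas_Bm.comp (measurable_id.prodMk measurable_const)

lemma key1 {n : ℕ} (hn : 1 ≤ n) (μ : Measure (OG (2 * n))) [IsProbabilityMeasure μ] [μ.IsMulLeftInvariant]
    (P : Matrix (Fin (2 * n)) (Fin (2 * n)) ℝ → ℝ)
    (σw : Matrix (Fin 2) (Fin 2) ℝ → ℝ) (hfac : IsFactorizing n P σw) :
    ∃ C : ENNReal, C ≠ ⊤ ∧ ∀ (H : Mx n → ENNReal) (H' : ZZ n → ENNReal), Measurable H → RInv H →
      (∀ x : XX n, H (Bm x) = H' x.2) → 
      C * ∫⁻ u : MM n, ENNReal.ofReal (P (Matrix.of u)) * H (Matrix.of u) = 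
        ∫⁻ z : ZZ n, ENNReal.ofReal (∏ j, σw (Matrix.of (z j))) * ENNReal.ofReal (Jw z) * H' z := by
  obtain ⟨C, hC, hcore⟩ := core1 hn
  have hone : (1 : Mx n) ∈ Matrix.orthogonalGroup (Fin (2 * n)) ℝ := one_mem _
  have hPr : RInv P := fun g k hk => by
    have := hfac.invariant g 1 hone k hk
    rwa [Matrix.one_mul] at this
  obtain ⟨Q, hQm, hQi, hQ1, hQ2⟩ := exists_tilde hn μ (fun g => ENNReal.ofReal (P g))
    (fun g k hk => by simp only [hPr g k hk]) hfac.integrable.aestronglyMeasurable.aemeasurable.ennreal_ofReal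
  have hsplit : ∀ (H : Mx n → ENNReal) (H' : ZZ n → ENNReal), Measurable H → RInv H →
      (∀ x : XX n, H (Bm x) = H' x.2) → 
      C * ∫⁻ u : MM n, ENNReal.ofReal (P (Matrix.of u)) * H (Matrix.of u) = 
        ∫⁻ z : ZZ n, (∫⁻ c : CC n, Q (Bm (c, z))) * ENNReal.ofReal (Jw z) * H' z := by
    intro H H' hH hHi hHH
    have h := hcore (fun g => Q g * H g) (hQm.mul hH) (fun g k hk => by simp only [hQi g k hk, hHi g k hk])
    have e1 : ∫⁻ u : MM n, ENNReal.ofReal (P (Matrix.of u)) * H (Matrix.of u) = ∫⁻ u : MM n, Q (Matrix.of u) * H (Matrix.of u) := by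
      refine lintegral_congr_ae ?_
      filter_upwards [hQ1] with u hu
      rw [hu]
    rw [e1, ← h]
    have e2 := lintegral_prod_symm' (μ := (volume : Measure (CC n))) (ν := (volume : Measure (ZZ n)))
      (fun x : XX n => Q (Bm x) * H (Bm x) * ENNReal.ofReal (Jw x.2))
      (((hQm.comp meas_Bm).mul (hH.comp meas_Bm)).mul ((meas_Jw n).comp measurable_snd).ennreal_ofReal)
    refine e2.trans ?_
    refine lintegral_congr fun z => ?_
    simp only [hHH]
    rw [lintegral_mul_const', lintegral_mul_const'']
    · ring
    · exact (hQm.comp (cont_Bz z)).aemeasurable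
    · exact ENNReal.ofReal_ne_top
  refine ⟨C, hC, fun H H' hH hHi hHH => ?_⟩
  rw [hsplit H H' hH hHi hHH]
  refine lintegral_congr_ae ?_
  have hQc : Measurable (fun z : ZZ n => ∫⁻ c : CC n, Q (Bm (c, z))) := by
    have : Measurable (fun x : ZZ n × CC n => Q (Bm (x.2, x.1))) :=
      (hQm.comp meas_Bm).comp measurable_swap
    exact this.lintegral_prod_right'
  have hfin : ∀ᵐ z : ZZ n, (∫⁻ c : CC n, Q (Bm (c, z))) * ENNReal.ofReal (Jw z) < ⊤ := by
    have h1 := hsplit (fun _ => 1) (fun _ => 1) measurable_const (fun _ _ _ => rfl) (fun _ => rfl)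
    simp only [mul_one] at h1
    refine ae_lt_top (hQc.mul (meas_Jw n).ennreal_ofReal) ?_
    rw [← h1]
    exact ENNReal.mul_ne_top hC hfac.integrable.lintegral_lt_top.ne
  have hQ3 : ∀ᵐ z : ZZ n, ∀ᵐ c : CC n, Q (Bm (c, z)) = ENNReal.ofReal (P (Bm (c, z))) := by
    have h3 := (Measure.measurePreserving_swap (μ := (volume : Measure (ZZ n))) (ν := (volume : Measure (CC n)))).quasiMeasurePreserving.ae hQ2
    exact Measure.ae_ae_of_ae_prod h3
  filter_upwards [hfin, hQ3, hfac.factor, ae_zdet n] with z h1 h2 h3 h4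
  have hJ := zdet_Jw z h4
  congr 2
  have hdet : LinearMap.det (Cl z) ≠ 0 := by rw [det_Cl]; exact hJ.ne'
  have hcont : Continuous (Cl z) := LinearMap.continuous_of_finiteDimensional _
  have hqmp : Measure.QuasiMeasurePreserving (Cl z) (volume : Measure (CC n)) volume := by
    refine ⟨hcont.measurable, ?_⟩
    rw [Measure.map_linearMap_addHaar_eq_smul_addHaar _ hdet]
    exact Measure.smul_absolutelyContinuous
  have h5 : ∀ᵐ c : CC n, Q (Bm (Cl z c, z)) = ENNReal.ofReal (P (Tmat c * Zmat z)) := by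
    filter_upwards [hqmp.ae h2] with c hc
    rw [hc, Bm_Cl]
  have h6 : ∫⁻ c : CC n, ENNReal.ofReal (P (Tmat c * Zmat z)) = ENNReal.ofReal (Jw z)⁻¹ * ∫⁻ c : CC n, Q (Bm (c, z)) := by
    rw [← lintegral_congr_ae h5]
    have := lintegral_lin (volume : Measure (CC n)) (Cl z) hdet (fun c => Q (Bm (c, z))) (hQm.comp (cont_Bz z))
    rw [this, det_Cl, abs_of_pos (inv_pos.2 hJ)]
  have hPm : AEStronglyMeasurable (fun c : CC n => P (Tmat c * Zmat z)) volume := by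
    refine AEMeasurable.aestronglyMeasurable ?_
    refine ⟨fun c => (Q (Bm (Cl z c, z))).toReal, ((hQm.comp (cont_Bz z)).comp hcont.measurable).ennreal_toReal, ?_⟩
    filter_upwards [h5] with c hc
    rw [hc, ENNReal.toReal_ofReal (hfac.nonneg _)]
  have h7 := integral_eq_lintegral_of_nonneg_ae (Filter.Eventually.of_forall fun c => hfac.nonneg (Tmat c * Zmat z)) hPm
  rw [h7, h6] at h3
  have hJe : (∏ j : Fin n, ((Matrix.of (z j)) * (Matrix.of (z j))ᵀ).det ^ (n - 1 - j.val)) = Jw z := by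
    unfold Jw zdet
    refine Finset.prod_congr rfl fun j _ => ?_
    rw [Matrix.det_mul, Matrix.det_transpose, ← sq]
  rw [hJe, ENNReal.toReal_mul, ENNReal.toReal_ofReal (inv_pos.2 hJ).le, ← mul_assoc, mul_inv_cancel₀ hJ.ne', one_mul] at h3
  have h8 : ∫⁻ c : CC n, Q (Bm (c, z)) ≠ ⊤ := by
    intro ht
    rw [ht, ENNReal.top_mul] at h1
    · exact lt_irrefl _ h1
    · simpa using hJ
  rw [← h3, ENNReal.ofReal_toReal h8]

abbrev TT (n : ℕ) := ℝ × (Fin n → ℝ)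
def Yg {n : ℕ} (g : Mx n) : TT n := ((g * gᵀ).det, fun j => Dm g j)
def Yz {n : ℕ} (z : ZZ n) : TT n := ((∏ a, zdet z a) ^ 2, fun j => (∏ a, if a ≤ j then zdet z a else 1) ^ 2)

lemma Yg_Bm {n : ℕ} (x : XX n) : Yg (Bm x) = Yz x.2 := by
  unfold Yg Yz
  ext j
  · simp only [Matrix.det_mul, Matrix.det_transpose, det_Bm, sq]
  · simp only [Dm_Bm]

lemma Yg_rinv {n : ℕ} : RInv (Yg : Mx n → TT n) := fun g k hk => by
  unfold Yg
  ext j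
  · have := detsq_rinv g k hk
    simp only [sq] at this
    show (g * k * (g * k)ᵀ).det = (g * gᵀ).det
    rw [Matrix.det_mul (g * k), Matrix.det_transpose, this, Matrix.det_mul g, Matrix.det_transpose]
  · simp only [Dm_mul_orth g k hk]

lemma meas_Yg {n : ℕ} : Measurable (Yg : Mx n → TT n) :=
  (meas_det (meas_mul measurable_id (meas_tr measurable_id))).prodMk
    (measurable_pi_iff.2 fun j => meas_Dm measurable_id j)

lemma meas_zdet {n : ℕ} (a : Fin n) : Measurable (fun z : ZZ n => zdet z a) := by
  unfold zdet
  simp only [Matrix.det_fin_two]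
  have : Continuous (fun z : ZZ n => (Matrix.of (z a)) 0 0 * (Matrix.of (z a)) 1 1 - (Matrix.of (z a)) 0 1 * (Matrix.of (z a)) 1 0) := by
    simp only [Matrix.of_apply]; fun_prop
  exact this.measurable

lemma meas_Yz {n : ℕ} : Measurable (Yz : ZZ n → TT n) := by
  refine Measurable.prodMk ?_ (measurable_pi_iff.2 fun j => ?_)
  · exact (Finset.measurable_prod _ fun a _ => meas_zdet a).pow_const 2
  · refine Measurable.pow_const (Finset.measurable_prod _ fun a _ => ?_) 2
    split_ifs
    · exact meas_zdet a
    · exact measurable_const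

lemma aem_prod {n : ℕ} (σw : Matrix (Fin 2) (Fin 2) ℝ → ℝ)
    (h : Integrable (fun z : Fin 2 → Fin 2 → ℝ => σw (Matrix.of z))) :
    AEMeasurable (fun z : ZZ n => ∏ j, σw (Matrix.of (z j))) := by
  refine Finset.aemeasurable_fun_prod _ fun j _ => ?_
  have := (Measure.quasiMeasurePreserving_eval (μ := fun _ : Fin n => (volume : Measure (Fin 2 → Fin 2 → ℝ))) j)
  exact h.aestronglyMeasurable.aemeasurable.comp_quasiMeasurePreserving this

lemma key2 {n : ℕ} (hn : 1 ≤ n) (μ : Measure (OG (2 * n))) [IsProbabilityMeasure μ] [μ.IsMulLeftInvariant]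
    (P : Matrix (Fin (2 * n)) (Fin (2 * n)) ℝ → ℝ)
    (σw : Matrix (Fin 2) (Fin 2) ℝ → ℝ) (hfac : IsFactorizing n P σw)
    (hσ : Integrable (fun z : Fin 2 → Fin 2 → ℝ => σw (Matrix.of z))) :
    ∃ C : ENNReal, C ≠ ⊤ ∧ ∀ (W : TT n → ℂ), Measurable W → 
      (C.toReal • ∫ u : MM n, P (Matrix.of u) • W (Yg (Matrix.of u)) = 
        ∫ z : ZZ n, ((∏ j, σw (Matrix.of (z j))) * Jw z) • W (Yz z)) ∧
      (C ≠ 0 → Integrable (fun z : ZZ n => ((∏ j, σw (Matrix.of (z j))) * Jw z) • W (Yz z)) → 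
        Integrable (fun u : MM n => P (Matrix.of u) • W (Yg (Matrix.of u)))) := by
  obtain ⟨C, hC, hkey⟩ := key1 hn μ P σw hfac
  refine ⟨C, hC, fun W hW => ?_⟩
  set p : MM n → ENNReal := fun u => ENNReal.ofReal (P (Matrix.of u)) with hp
  set r : ZZ n → ENNReal := fun z => ENNReal.ofReal ((∏ j, σw (Matrix.of (z j))) * Jw z) with hr
  have hs0 : ∀ z : ZZ n, 0 ≤ ∏ j, σw (Matrix.of (z j)) := fun z => Finset.prod_nonneg fun j _ => hfac.wnonneg _
  have hJ0 : ∀ z : ZZ n, 0 ≤ Jw z := fun z => Finset.prod_nonneg fun j _ => by positivity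
  have hpm : AEMeasurable p := hfac.integrable.aestronglyMeasurable.aemeasurable.ennreal_ofReal
  have hrm : AEMeasurable r := ((aem_prod σw hσ).mul (meas_Jw n).aemeasurable).ennreal_ofReal
  have hY : Measurable (fun u : MM n => Yg (Matrix.of u)) := meas_Yg.comp meas_of
  have hmeas : C • Measure.map (fun u : MM n => Yg (Matrix.of u)) (volume.withDensity p) =
      Measure.map Yz (volume.withDensity r) := by
    ext S hS
    rw [Measure.smul_apply, Measure.map_apply hY hS, Measure.map_apply meas_Yz hS,
      withDensity_apply _ (hY hS), withDensity_apply _ (meas_Yz hS), ← lintegral_indicator (hY hS),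
      ← lintegral_indicator (meas_Yz hS), smul_eq_mul]
    have h := hkey (fun g => S.indicator 1 (Yg g)) (fun z => S.indicator 1 (Yz z))
      ((measurable_one.indicator hS).comp meas_Yg) (fun g k hk => by simp only [Yg_rinv g k hk])
      (fun x => by simp only [Yg_Bm])
    refine Eq.trans (congrArg (fun t => C * t) ?_) (h.trans ?_)
    · refine lintegral_congr fun u => ?_
      by_cases hu : Yg (Matrix.of u) ∈ S
      · rw [Set.indicator_of_mem (show u ∈ _ from hu), Set.indicator_of_mem hu]; simp [hp]
      · rw [Set.indicator_of_notMem (show u ∉ _ from hu), Set.indicator_of_notMem hu]; simp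
    · refine lintegral_congr fun z => ?_
      by_cases hu : Yz z ∈ S
      · rw [Set.indicator_of_mem (show z ∈ _ from hu), Set.indicator_of_mem hu]
        simp [hr, ENNReal.ofReal_mul (hs0 z)]
      · rw [Set.indicator_of_notMem (show z ∉ _ from hu), Set.indicator_of_notMem hu]; simp
  have hptop : ∀ᵐ u : MM n, p u < ⊤ := Filter.Eventually.of_forall fun u => ENNReal.ofReal_lt_top
  have hrtop : ∀ᵐ u : ZZ n, r u < ⊤ := Filter.Eventually.of_forall fun u => ENNReal.ofReal_lt_top
  have hpr : ∀ u, (p u).toReal = P (Matrix.of u) := fun u => ENNReal.toReal_ofReal (hfac.nonneg _)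
  have hrr : ∀ z, (r z).toReal = (∏ j, σw (Matrix.of (z j))) * Jw z := fun z => 
    ENNReal.toReal_ofReal (mul_nonneg (hs0 z) (hJ0 z))
  constructor
  · have h := congrArg (fun ν => ∫ t, W t ∂ν) hmeas
    beta_reduce at h
    rw [integral_smul_measure, integral_map hY.aemeasurable hW.aestronglyMeasurable, 
      integral_map meas_Yz.aemeasurable hW.aestronglyMeasurable,
      integral_withDensity_eq_integral_toReal_smul₀ hpm hptop, 
      integral_withDensity_eq_integral_toReal_smul₀ hrm hrtop] at h
    simp only [hpr, hrr] at h
    exact h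
  · intro hC0 hi
    have h1 : Integrable (fun z => W (Yz z)) (volume.withDensity r) := by
      rw [integrable_withDensity_iff_integrable_smul₀' hrm hrtop]
      simp only [hrr]; exact hi
    have h2 : Integrable W (Measure.map Yz (volume.withDensity r)) :=
      (integrable_map_measure hW.aestronglyMeasurable meas_Yz.aemeasurable).2 h1
    rw [← hmeas, integrable_smul_measure hC0 hC, 
      integrable_map_measure hW.aestronglyMeasurable hY.aemeasurable] at h2
    have h3 : Integrable (fun u : MM n => W (Yg (Matrix.of u))) (volume.withDensity p) := h2
    rw [integrable_withDensity_iff_integrable_smul₀' hpm hptop] at h3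
    simp only [hpr] at h3; exact h3

lemma tele (n : ℕ) (s : Fin n → ℂ) (a : Fin n) :
    ∑ j : Fin n, (if a ≤ j then 2 * expo n s j else 0) = s a + n + 1 - 2 * ((n : ℂ) - a) := by
  set S : ℕ → ℂ := fun i => if h : i < n then s ⟨i, h⟩ else -(n : ℂ) - 1 with hS
  have h1 : ∀ j : Fin n, 2 * expo n s j = S j - S (j + 1) - 2 := by
    intro j
    simp only [hS, expo, j.isLt, dif_pos]
    ring
  have h2 : ∀ m, (a : ℕ) ≤ m → ∑ i ∈ Finset.Ico (a : ℕ) m, (S i - S (i + 1) - 2) = S a - S m - 2 * ((m : ℂ) - a) := by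
    intro m hm
    induction m, hm using Nat.le_induction with
    | base => simp
    | succ m hm ih =>
      rw [Finset.sum_Ico_succ_top hm, ih]; push_cast; ring
  have h3 : ∑ j : Fin n, (if a ≤ j then 2 * expo n s j else 0) = ∑ i ∈ Finset.Ico (a : ℕ) n, (S i - S (i + 1) - 2) := by
    simp only [h1]
    have := Fin.sum_univ_eq_sum_range (fun i => if (a : ℕ) ≤ i then S i - S (i + 1) - 2 else 0) n
    have h4 : ∑ j : Fin n, (if a ≤ j then S j - S (j + 1) - 2 else 0) = ∑ j : Fin n, (if (a : ℕ) ≤ (j : ℕ) then S j - S (j + 1) - 2 else 0) := rfl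
    rw [h4, this, ← Finset.sum_filter]
    refine Finset.sum_congr ?_ fun _ _ => rfl
    ext i; simp; omega
  rw [h3, h2 n a.isLt.le]
  have e1 : S a = s a := by simp [hS]
  have e2 : S n = -(n : ℂ) - 1 := by simp [hS]
  rw [e1, e2]; ring

lemma meas_cpw (w : ℂ) : Measurable (fun t : ℝ => cpw t w) := by
  unfold cpw
  refine Measurable.ite (measurableSet_singleton (0 : ℝ)) measurable_const ?_
  exact Complex.measurable_exp.comp (measurable_const.mul (Complex.measurable_ofReal.comp Real.measurable_log))

def WW (n : ℕ) (s : Fin n → ℂ) (t : TT n) : ℂ :=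
  ((t.1 ^ (-(2 * (n : ℝ) - 1) / 2) : ℝ) : ℂ) * ∏ j, cpw (t.2 j) (expo n s j)

lemma meas_WW (n : ℕ) (s : Fin n → ℂ) : Measurable (WW n s) := by
  unfold WW
  refine Measurable.mul (Complex.measurable_ofReal.comp (measurable_fst.pow_const _)) ?_
  exact Finset.measurable_prod _ fun j _ => (meas_cpw _).comp ((measurable_pi_apply j).comp measurable_snd)

lemma cpw_pos {t : ℝ} (ht : 0 < t) (w : ℂ) : cpw t w = Complex.exp (w * Real.log t) := by
  simp [cpw, ht.ne']

lemma WW_z {n : ℕ} (s : Fin n → ℂ) (z : ZZ n) (hz : ∀ a, zdet z a ≠ 0) :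
    ((Jw z : ℝ) : ℂ) * WW n s (Yz z) = ∏ j, cpw |zdet z j| (s j - n) := by
  set L : Fin n → ℝ := fun a => Real.log |zdet z a| with hL
  have hd : ∀ a, 0 < |zdet z a| := fun a => abs_pos.2 (hz a)
  have hsq : ∀ a, zdet z a ^ 2 = Real.exp (2 * L a) := fun a => by
    rw [← sq_abs, two_mul, Real.exp_add, hL]; simp only; rw [Real.exp_log (hd a), sq]
  have e1 : Jw z = Real.exp (∑ a : Fin n, 2 * ((n : ℝ) - 1 - a) * L a) := by
    unfold Jw
    rw [Real.exp_sum]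
    refine Finset.prod_congr rfl fun a _ => ?_
    rw [hsq, ← Real.exp_nat_mul]
    congr 1
    have : (((n - 1 - a.val : ℕ)) : ℝ) = (n : ℝ) - 1 - a := by
      have := a.isLt
      rw [Nat.cast_sub (by omega), Nat.cast_sub (by omega)]; simp
    rw [this]; ring
  have e2 : (∏ a, zdet z a) ^ 2 = Real.exp (∑ a, 2 * L a) := by
    rw [← Finset.prod_pow, Real.exp_sum]; exact Finset.prod_congr rfl fun a _ => hsq a
  have e3 : ∀ j : Fin n, (∏ a, if a ≤ j then zdet z a else 1) ^ 2 = Real.exp (∑ a, if a ≤ j then 2 * L a else 0) := by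
    intro j
    rw [← Finset.prod_pow, Real.exp_sum]
    refine Finset.prod_congr rfl fun a _ => ?_
    split_ifs
    · exact hsq a
    · simp
  have e4 : WW n s (Yz z) = Complex.exp (((-(2 * (n : ℝ) - 1) / 2 : ℝ) : ℂ) * ∑ a, 2 * (L a : ℂ) + ∑ j, expo n s j * ∑ a, if a ≤ j then 2 * (L a : ℂ) else 0) := by
    unfold WW Yz
    simp only
    rw [Complex.exp_add, Complex.exp_sum, e2]
    congr 1
    · rw [← Real.exp_mul, Complex.ofReal_exp]
      congr 1
      push_cast; ring
    · refine Finset.prod_congr rfl fun j _ => ?_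
      rw [e3, cpw_pos (Real.exp_pos _), Real.log_exp]
      congr 2
      rw [Complex.ofReal_sum]
      refine Finset.sum_congr rfl fun a _ => ?_
      split_ifs <;> simp
  have e5 : ∏ j, cpw |zdet z j| (s j - n) = Complex.exp (∑ a, (s a - n) * L a) := by
    rw [Complex.exp_sum]
    exact Finset.prod_congr rfl fun j _ => cpw_pos (hd j) _
  rw [e4, e5, e1, Complex.ofReal_exp, ← Complex.exp_add]
  congr 1
  have e6 : ∑ j, expo n s j * ∑ a, (if a ≤ j then 2 * (L a : ℂ) else 0) = ∑ a, (L a : ℂ) * (s a + n + 1 - 2 * ((n : ℂ) - (a : ℕ))) := by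
    simp_rw [Finset.mul_sum]
    rw [Finset.sum_comm]
    refine Finset.sum_congr rfl fun a _ => ?_
    rw [← tele, Finset.mul_sum]
    refine Finset.sum_congr rfl fun j _ => ?_
    split_ifs
    · ring
    · simp
  rw [e6, Finset.mul_sum, Complex.ofReal_sum, ← Finset.sum_add_distrib, ← Finset.sum_add_distrib]
  refine Finset.sum_congr rfl fun a _ => ?_
  push_cast
  ring

lemma int_factor (σw : Matrix (Fin 2) (Fin 2) ℝ → ℝ) (hw : ∀ z, 0 ≤ σw z)
    (hσ : Integrable (fun z : Fin 2 → Fin 2 → ℝ => σw (Matrix.of z))) (w : ℂ)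
    (h : Integrable (fun z : Fin 2 → Fin 2 → ℝ => σw (Matrix.of z) * |(Matrix.of z).det| ^ w.re)) :
    Integrable (fun z : Fin 2 → Fin 2 → ℝ => (σw (Matrix.of z) : ℂ) * cpw |(Matrix.of z).det| w) := by
  have hm : Measurable fun u : Fin 2 → Fin 2 → ℝ => (Matrix.of u).det :=
    meas_det (meas_mat _ fun i j => (measurable_pi_apply j).comp (measurable_pi_apply i))
  refine h.mono' ?_ ?_
  · refine AEStronglyMeasurable.mul ?_ ?_
    · exact Complex.continuous_ofReal.comp_aestronglyMeasurable hσ.aestronglyMeasurable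
    · exact ((meas_cpw w).comp hm.abs).aestronglyMeasurable
  · refine Filter.Eventually.of_forall fun z => ?_
    rw [norm_mul, Complex.norm_real, Real.norm_of_nonneg (hw _)]
    refine mul_le_mul_of_nonneg_left ?_ (hw _)
    by_cases h0 : |(Matrix.of z).det| = 0
    · rw [h0]; simp [cpw]; positivity
    · have hp : 0 < |(Matrix.of z).det| := lt_of_le_of_ne (abs_nonneg _) (Ne.symm h0)
      rw [cpw_pos hp, Complex.norm_exp, Real.rpow_def_of_pos hp]
      apply le_of_eq
      congr 1
      simp [Complex.mul_re, mul_comm]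

lemma C_val {n : ℕ} (hn : 1 ≤ n) (P : Mx n → ℝ)
    (σw : Matrix (Fin 2) (Fin 2) ℝ → ℝ) (hfac : IsFactorizing n P σw) (C : ENNReal)
    (h : C.toReal • ∫ u : MM n, P (Matrix.of u) • (1 : ℂ) = 
        ∫ z : ZZ n, ((∏ j, σw (Matrix.of (z j))) * Jw z) • (1 : ℂ)) :
    C.toReal = ∏ j : Fin n, mSigR σw (2 * ((j : ℕ) + 1 : ℝ) - 1) := by
  have e1 : ∫ u : MM n, P (Matrix.of u) • (1 : ℂ) = 1 := by
    simp only [Complex.real_smul, mul_one]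
    rw [integral_complex_ofReal, hfac.prob]; simp
  have e2 : ∫ z : ZZ n, ((∏ j, σw (Matrix.of (z j))) * Jw z) • (1 : ℂ) = ((∏ j : Fin n, mSigR σw (2 * ((j : ℕ) + 1 : ℝ) - 1) : ℝ) : ℂ) := by
    simp only [Complex.real_smul, mul_one]
    rw [integral_complex_ofReal]
    congr 1
    have : ∀ z : ZZ n, (∏ j, σw (Matrix.of (z j))) * Jw z = ∏ j : Fin n, (fun y : Fin 2 → Fin 2 → ℝ => σw (Matrix.of y) * ((Matrix.of y).det ^ 2) ^ (n - 1 - j.val)) (z j) := by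
      intro z
      unfold Jw zdet
      rw [← Finset.prod_mul_distrib]
    simp_rw [this]
    have h2 := integral_fintype_prod_volume_eq_prod (𝕜 := ℝ) (ι := Fin n) (E := fun _ => Fin 2 → Fin 2 → ℝ)
      (fun (j : Fin n) (y : Fin 2 → Fin 2 → ℝ) => σw (Matrix.of y) * ((Matrix.of y).det ^ 2) ^ (n - 1 - j.val))
    refine h2.trans ?_
    rw [← Equiv.prod_comp Fin.revPerm]
    refine Finset.prod_congr rfl fun j _ => ?_
    unfold mSigR
    refine integral_congr_ae (Filter.Eventually.of_forall fun y => ?_)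
    have hj := j.isLt
    have h3 : n - 1 - (Fin.revPerm j).val = j.val := by
      simp [Fin.revPerm, Fin.val_rev]; omega
    simp only [h3]
    congr 1
    rw [← sq_abs, ← pow_mul, ← Real.rpow_natCast]
    congr 1
    push_cast; ring
  rw [e1, e2, Complex.real_smul, mul_one] at h
  exact_mod_cast h

lemma mp_mulL {n : ℕ} (k : OG (2 * n)) :
    MeasurePreserving (mulL (k : Mx n)) (volume : Measure (MM n)) volume := by
  have hd : LinearMap.det (mulL (k : Mx n)) = 1 := by rw [det_mulL, abs_det_orth]
  have h := Measure.map_linearMap_addHaar_eq_smul_addHaar (volume : Measure (MM n)) (f := mulL (k : Mx n)) (by rw [hd]; exact one_ne_zero)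
  rw [hd] at h
  simp only [inv_one, abs_one, ENNReal.ofReal_one, one_smul] at h
  exact ⟨(LinearMap.continuous_of_finiteDimensional (mulL (k : Mx n))).measurable, h⟩

lemma fub {n : ℕ} (μ : Measure (OG (2 * n))) [IsProbabilityMeasure μ] (G : Mx n → ℂ)
    (hG : Integrable (fun u : MM n => G (Matrix.of u))) :
    ∫ u : MM n, ∫ k : OG (2 * n), G ((k : Mx n) * Matrix.of u) ∂μ = ∫ u : MM n, G (Matrix.of u) := by
  have hm : Measurable (fun p : OG (2 * n) × MM n => ((p.1 : Mx n) * Matrix.of p.2 : Mx n)) :=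
    meas_mul (meas_coe.comp measurable_fst) (meas_of.comp measurable_snd)
  have hmp : MeasurePreserving (fun p : OG (2 * n) × MM n => (p.1, mulL (p.1 : Mx n) p.2))
      (μ.prod volume) (μ.prod volume) := by
    refine MeasurePreserving.skew_product (f := id) (g := fun (k : OG (2 * n)) (u : MM n) => mulL (k : Mx n) u) (MeasurePreserving.id μ) hm ?_
    exact Filter.Eventually.of_forall fun k => (mp_mulL k).map_eq
  have hG2 : Integrable (fun p : OG (2 * n) × MM n => G (Matrix.of p.2)) (μ.prod volume) := hG.comp_snd μ
  have hG3 : Integrable (fun p : OG (2 * n) × MM n => G ((p.1 : Mx n) * Matrix.of p.2)) (μ.prod volume) :=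
    hmp.integrable_comp_of_integrable hG2
  have e1 : ∫ p : OG (2 * n) × MM n, G ((p.1 : Mx n) * Matrix.of p.2) ∂(μ.prod volume) = 
      ∫ p : OG (2 * n) × MM n, G (Matrix.of p.2) ∂(μ.prod volume) := by
    have h1 := integral_map (μ := μ.prod (volume : Measure (MM n))) hmp.measurable.aemeasurable
      (f := fun p : OG (2 * n) × MM n => G (Matrix.of p.2)) (by rw [hmp.map_eq]; exact hG2.aestronglyMeasurable)
    rw [hmp.map_eq] at h1
    exact h1.symm
  have e2 := integral_prod_symm _ hG3
  have e3 := integral_prod _ hG2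
  calc _ = _ := e2.symm
    _ = _ := e1
    _ = _ := e3
    _ = _ := by simp

/-- Proposition 3.1(2): the spherical transform `S_Ψ` of a
factorizing ensemble is `∏_j m_σ(s_j - n + 1)/m_σ(2j - 1)`. -/
theorem spherical_transform_factorizing (n : ℕ) (hn : 1 ≤ n)
    (μ : Measure (OG (2 * n))) (hμ : μ.IsHaarMeasure) (hμ1 : IsProbabilityMeasure μ)
    (P : Matrix (Fin (2 * n)) (Fin (2 * n)) ℝ → ℝ)
    (σw : Matrix (Fin 2) (Fin 2) ℝ → ℝ) (hfac : IsFactorizing n P σw)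
    (s : Fin n → ℂ)
    (hsint : ∀ j : Fin n, Integrable (fun z : Fin 2 → Fin 2 → ℝ =>
      σw (Matrix.of z) * |(Matrix.of z).det| ^ ((s j).re - (n : ℝ))))
    (hmint : ∀ j : Fin n, Integrable (fun z : Fin 2 → Fin 2 → ℝ =>
      σw (Matrix.of z) * |(Matrix.of z).det| ^ (2 * ((j : ℕ) + 1 : ℝ) - 1 - 1)))
    (hmpos : ∀ j : Fin n, 0 < mSigR σw (2 * ((j : ℕ) + 1 : ℝ) - 1)) :
    (∫ u in {u : Fin (2 * n) → Fin (2 * n) → ℝ | IsUnit (Matrix.of u)},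
        ((P (Matrix.of u) *
            ((Matrix.of u * (Matrix.of u)ᵀ).det) ^ (-(2 * (n : ℝ) - 1) / 2) : ℝ) : ℂ) *
          sphInt n μ s (Matrix.of u * (Matrix.of u)ᵀ)) =
      ∏ j : Fin n,
        mSigC σw (s j - (n : ℂ) + 1) / (mSigR σw (2 * ((j : ℕ) + 1 : ℝ) - 1) : ℂ) := by
  have hσ : Integrable (fun z : Fin 2 → Fin 2 → ℝ => σw (Matrix.of z)) := by
    have h := hmint ⟨0, hn⟩
    have h0 : (2 * (((⟨0, hn⟩ : Fin n) : ℕ) + 1 : ℝ) - 1 - 1) = 0 := by norm_num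
    simp only [h0, Real.rpow_zero, mul_one] at h
    exact h
  obtain ⟨C, hC, hkey⟩ := key2 hn μ P σw hfac hσ
  have hCv := C_val hn P σw hfac C (hkey (fun _ => 1) measurable_const).1
  have hCpos : 0 < C.toReal := by rw [hCv]; exact Finset.prod_pos fun j _ => hmpos j
  have hC0 : C ≠ 0 := by rintro rfl; simp at hCpos
  obtain ⟨hk1, hk2⟩ := hkey (WW n s) (meas_WW n s)
  have hze : (fun z : ZZ n => ((∏ j, σw (Matrix.of (z j))) * Jw z) • WW n s (Yz z)) =ᵐ[volume]
      fun z : ZZ n => ∏ j : Fin n, (fun y : Fin 2 → Fin 2 → ℝ => (σw (Matrix.of y) : ℂ) * cpw |(Matrix.of y).det| (s j - n)) (z j) := by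
    filter_upwards [ae_zdet n] with z hz
    rw [Complex.real_smul, Complex.ofReal_mul, mul_assoc, WW_z s z hz, Complex.ofReal_prod, ← Finset.prod_mul_distrib]
    rfl
  have hfi : ∀ j : Fin n, Integrable (fun y : Fin 2 → Fin 2 → ℝ => (σw (Matrix.of y) : ℂ) * cpw |(Matrix.of y).det| (s j - n)) := fun j => by
    refine int_factor σw hfac.wnonneg hσ _ ?_
    have : (s j - (n : ℂ)).re = (s j).re - n := by simp
    rw [this]; exact hsint j
  have hzi : Integrable (fun z : ZZ n => ((∏ j, σw (Matrix.of (z j))) * Jw z) • WW n s (Yz z)) := by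
    refine Integrable.congr ?_ hze.symm
    exact Integrable.fintype_prod (fun j => hfi j)
  have hG := hk2 hC0 hzi
  rw [integral_congr_ae hze] at hk1
  have h2 := integral_fintype_prod_volume_eq_prod (𝕜 := ℂ) (ι := Fin n) (E := fun _ => Fin 2 → Fin 2 → ℝ)
      (fun (j : Fin n) (y : Fin 2 → Fin 2 → ℝ) => (σw (Matrix.of y) : ℂ) * cpw |(Matrix.of y).det| (s j - n))
  have hk3 := hk1.trans h2
  have hunit : ∀ᵐ u : MM n, u ∈ {u : Fin (2 * n) → Fin (2 * n) → ℝ | IsUnit (Matrix.of u)} := by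
    filter_upwards [ae_detM n hn] with u hu
    exact (Matrix.isUnit_iff_isUnit_det _).2 (isUnit_iff_ne_zero.2 hu)
  rw [Measure.restrict_eq_self_of_ae_mem hunit]
  have hone : (1 : Mx n) ∈ Matrix.orthogonalGroup (Fin (2 * n)) ℝ := one_mem _
  have hint : ∀ u : MM n, ((P (Matrix.of u) *
            ((Matrix.of u * (Matrix.of u)ᵀ).det) ^ (-(2 * (n : ℝ) - 1) / 2) : ℝ) : ℂ) *
          sphInt n μ s (Matrix.of u * (Matrix.of u)ᵀ) = 
          ∫ k : OG (2 * n), (fun g : Mx n => P g • WW n s (Yg g)) ((k : Mx n) * Matrix.of u) ∂μ := by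
    intro u
    unfold sphInt
    rw [← integral_const_mul]
    refine integral_congr_ae (Filter.Eventually.of_forall fun k => ?_)
    have hP : P ((k : Mx n) * Matrix.of u) = P (Matrix.of u) := by
      have := hfac.invariant (Matrix.of u) k k.2 1 hone
      rwa [Matrix.mul_one] at this
    have hD : ((k : Mx n) * Matrix.of u * ((k : Mx n) * Matrix.of u)ᵀ) = (k : Mx n) * (Matrix.of u * (Matrix.of u)ᵀ) * (k : Mx n)ᵀ := by
      rw [Matrix.transpose_mul]; simp only [Matrix.mul_assoc]
    have hdet : ((k : Mx n) * Matrix.of u * ((k : Mx n) * Matrix.of u)ᵀ).det = (Matrix.of u * (Matrix.of u)ᵀ).det := by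
      have ho := orth_det k.2
      rw [hD, Matrix.det_mul, Matrix.det_mul, Matrix.det_transpose]
      linear_combination (Matrix.of u * (Matrix.of u)ᵀ).det * ho
    simp only [WW, Yg, hP, hdet]
    simp only [Dm, hD]
    rw [Complex.real_smul, Complex.ofReal_mul, mul_assoc]
  simp_rw [hint]
  have hfub := fub μ (fun g : Mx n => P g • WW n s (Yg g)) hG
  beta_reduce at hfub
  rw [hfub, Finset.prod_div_distrib]
  have hne : ((∏ j : Fin n, mSigR σw (2 * ((j : ℕ) + 1 : ℝ) - 1) : ℝ) : ℂ) ≠ 0 := by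
    rw [← hCv]; exact_mod_cast hCpos.ne'
  rw [← Complex.ofReal_prod, eq_div_iff hne, ← hCv, mul_comm]
  rw [Complex.real_smul] at hk3
  refine hk3.trans (Finset.prod_congr rfl fun j _ => ?_)
  unfold mSigC
  simp only [add_sub_cancel_right]


end
end

section
/- Let n ≥ 1, let a_1,…,a_n be pairwise distinct positive reals, and let h : (0,∞) → [0,∞) be integrable with 0 < Mh(2m+1) < ∞ for m = 0,…,n−1. For each k = 1,…,n write ∏_{i≠k} (a_i² − y²)/(a_i² − a_k²) = Σ_{m=0}^{n−1} d_{km} y^{2m} and define p_k(y) := Σ_{m=0}^{n−1} (d_{km}/Mh(2m+1)) y^{2m} and q_l(y) := (1/a_l)·h(y/a_l). Then ∫₀^∞ p_k(y)·q_l(y) dy = δ_{kl} for all 1 ≤ k,l ≤ n. -/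
open MeasureTheory
open scoped BigOperators

noncomputable section

/-- Mellin transform `Mh(u) = ∫₀^∞ h(t) t^{u-1} dt`. -/
def mellH (h : ℝ → ℝ) (u : ℝ) : ℝ := ∫ t in Set.Ioi (0 : ℝ), h t * t ^ (u - 1)

/-- Theorem 3.9: bi-orthonormality of the system built from the
Lagrange-type even polynomials `∏_{i≠k}(a_i²-y²)/(a_i²-a_k²)` and `y ↦ h(y/a_l)/a_l`. -/
theorem biorthonormal_fixed_matrix (n : ℕ) (hn : 1 ≤ n)
    (a : Fin n → ℝ) (ha : ∀ j, 0 < a j) (ha' : Function.Injective a)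
    (h : ℝ → ℝ) (hh0 : ∀ t : ℝ, 0 < t → 0 ≤ h t) (hhint : IntegrableOn h (Set.Ioi 0))
    (hmellpos : ∀ m ∈ Finset.range n, 0 < mellH h (2 * (m : ℝ) + 1))
    (hmellint : ∀ m ∈ Finset.range n,
      IntegrableOn (fun t : ℝ => h t * t ^ (2 * m : ℕ)) (Set.Ioi 0))
    (d : Fin n → Fin n → ℝ)
    (hd : ∀ (k : Fin n) (y : ℝ),
      (∏ i ∈ Finset.univ.erase k, (((a i) ^ 2 - y ^ 2) / ((a i) ^ 2 - (a k) ^ 2))) =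
        ∑ m : Fin n, d k m * y ^ (2 * m.val)) :
    ∀ k l : Fin n,
      (∫ y in Set.Ioi (0 : ℝ),
          (∑ m : Fin n, d k m / mellH h (2 * (m.val : ℝ) + 1) * y ^ (2 * m.val)) *
            ((1 / a l) * h (y / a l))) =
        if k = l then 1 else 0 := by
  intro k l
  have hal := ha l
  have hal' := hal.ne'
  have hM : ∀ m : Fin n, (∫ t in Set.Ioi (0 : ℝ), h t * t ^ (2 * m.val)) =
      mellH h (2 * (m.val : ℝ) + 1) := by
    intro m
    unfold mellH
    refine setIntegral_congr_fun measurableSet_Ioi fun t _ => ?_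
    have : (2 * (m.val : ℝ) + 1 - 1) = ((2 * m.val : ℕ) : ℝ) := by push_cast; ring
    simp only [this, Real.rpow_natCast]
  have key : (∫ y in Set.Ioi (0 : ℝ),
          (∑ m : Fin n, d k m / mellH h (2 * (m.val : ℝ) + 1) * y ^ (2 * m.val)) *
            ((1 / a l) * h (y / a l))) = ∑ m : Fin n, d k m * (a l) ^ (2 * m.val) := by
    have e := integral_comp_mul_left_Ioi' (fun y : ℝ =>
      (∑ m : Fin n, d k m / mellH h (2 * (m.val : ℝ) + 1) * y ^ (2 * m.val)) *
            ((1 / a l) * h (y / a l))) 0 hal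
    rw [mul_zero] at e
    rw [← e, smul_eq_mul, ← integral_const_mul]
    have e2 : ∀ x : ℝ, a l * ((∑ m : Fin n, d k m / mellH h (2 * (m.val : ℝ) + 1) *
        (a l * x) ^ (2 * m.val)) * ((1 / a l) * h (a l * x / a l))) =
        ∑ m : Fin n, (d k m / mellH h (2 * (m.val : ℝ) + 1) * (a l) ^ (2 * m.val)) *
          (h x * x ^ (2 * m.val)) := by
      intro x
      rw [mul_div_cancel_left₀ _ hal', mul_left_comm, ← mul_assoc (a l),
        mul_one_div_cancel hal', one_mul, Finset.sum_mul]
      refine Finset.sum_congr rfl fun m _ => ?_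
      rw [mul_pow]; ring
    simp only [e2]
    rw [integral_finset_sum]
    · refine Finset.sum_congr rfl fun m _ => ?_
      rw [integral_const_mul, hM m]
      have := (hmellpos m.val (Finset.mem_range.2 m.2)).ne'
      field_simp
    · intro m _
      exact (hmellint m.val (Finset.mem_range.2 m.2)).const_mul _
  rw [key, ← hd]
  have hsq : ∀ i j, i ≠ j → (a i) ^ 2 - (a j) ^ 2 ≠ 0 := by
    intro i j hij h0
    exact hij (ha' ((sq_eq_sq₀ (ha i).le (ha j).le).1 (sub_eq_zero.1 h0)))
  split_ifs with hkl
  · subst hkl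
    exact Finset.prod_eq_one fun i hi => div_self (hsq i k (Finset.ne_of_mem_erase hi))
  · refine Finset.prod_eq_zero (Finset.mem_erase.2 ⟨Ne.symm hkl, Finset.mem_univ l⟩) ?_
    simp

end
end
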